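/- Let θ : ℝⁿ → [−∞,+∞] be symmetric and locally Lipschitz continuous relative to its domain, and let g = θ∘λ be the associated spectral function. Assume: Y is a proximal subgradient of g at X; θ is parabolically epi-differentiable at λ(X) for λ'(X;H) for every H ∈ T_{dom g}(X); g is subdifferentially regular at X; and Y = U·Diag(y)·Uᵀ for some y ∈ ∂̂θ(λ(X)) and U ∈ Oⁿ(X). Then g is generalized twice differentiable at X for Y if and only if θ is generalized twice differentiable at λ(X) for y. -/

import Mathlib

open Filter Topology Matrix

noncomputable section

namespace SpecPaper

/-! ## Generic variational analysis definitions over a topological real vector space -/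

variable {E : Type*}

section Generic

variable [AddCommGroup E] [Module ℝ E] [TopologicalSpace E]

/-- `f x` is finite (neither `+∞` nor `-∞`). -/
def IsFiniteAt (f : E → EReal) (x : E) : Prop :=
  f x ≠ ⊤ ∧ f x ≠ ⊥

/-- The norm induced by a given inner product. -/
noncomputable def nrm (ip : E → E → ℝ) (x : E) : ℝ :=
  Real.sqrt (ip x x)

/-- The subderivative `df(x)(w)`. -/
noncomputable def subderiv (f : E → EReal) (x w : E) : EReal :=
  Filter.liminf (fun p : ℝ × E => (((p.1)⁻¹ : ℝ) : EReal) * (f (x + p.1 • p.2) - f x))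
    ((nhdsWithin (0 : ℝ) (Set.Ioi 0)) ×ˢ nhds w)

/-- The second-order difference quotient `Δ²ₜ f(x,v)(w)`. -/
noncomputable def sdq2 (ip : E → E → ℝ) (f : E → EReal) (x v : E) (t : ℝ) (w : E) : EReal :=
  (((2 / t ^ 2) : ℝ) : EReal) * (f (x + t • w) - f x - ((t * ip v w : ℝ) : EReal))

/-- The second subderivative `d²f(x,v)(w)`. -/
noncomputable def subderiv2 (ip : E → E → ℝ) (f : E → EReal) (x v w : E) : EReal :=
  Filter.liminf (fun p : ℝ × E => sdq2 ip f x v p.1 p.2)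
    ((nhdsWithin (0 : ℝ) (Set.Ioi 0)) ×ˢ nhds w)

/-- Twice epi-differentiability of `f` at `x` for `v`. -/
def TwiceEpiDiff (ip : E → E → ℝ) (f : E → EReal) (x v : E) : Prop :=
  IsFiniteAt f x ∧
    ∀ t : ℕ → ℝ, (∀ k, 0 < t k) → Tendsto t atTop (nhds 0) →
      ∀ w : E, ∃ ws : ℕ → E, Tendsto ws atTop (nhds w) ∧
        Tendsto (fun k => sdq2 ip f x v (t k) (ws k)) atTop (nhds (subderiv2 ip f x v w))

/-- `v` is a regular subgradient of `f` at `x`. -/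
def RegSubgrad (ip : E → E → ℝ) (f : E → EReal) (x v : E) : Prop :=
  IsFiniteAt f x ∧
    (0 : EReal) ≤ Filter.liminf
      (fun y : E =>
        (((nrm ip (y - x))⁻¹ : ℝ) : EReal) * (f y - f x - ((ip v (y - x) : ℝ) : EReal)))
      (nhdsWithin x {x}ᶜ)

/-- `v` is a (limiting) subgradient of `f` at `x`. -/
def LimSubgrad (ip : E → E → ℝ) (f : E → EReal) (x v : E) : Prop :=
  ∃ xs vs : ℕ → E, (∀ k, RegSubgrad ip f (xs k) (vs k)) ∧
    Tendsto xs atTop (nhds x) ∧ Tendsto vs atTop (nhds v) ∧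
    Tendsto (fun k => f (xs k)) atTop (nhds (f x))

/-- The tangent cone to `C` at `x`. -/
def tangentCone (C : Set E) (x : E) : Set E :=
  {w | ∃ (t : ℕ → ℝ) (ws : ℕ → E), (∀ k, 0 < t k) ∧ Tendsto t atTop (nhds 0) ∧
    Tendsto ws atTop (nhds w) ∧ ∀ k, x + t k • ws k ∈ C}

/-- The regular normal cone to `C` at `x`. -/
def regNormalCone (ip : E → E → ℝ) (C : Set E) (x : E) : Set E :=
  {v | ∀ w ∈ tangentCone C x, ip v w ≤ 0}

/-- The limiting normal cone to `C` at `x`. -/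
def limNormalCone (ip : E → E → ℝ) (C : Set E) (x : E) : Set E :=
  {v | ∃ xs vs : ℕ → E, (∀ k, xs k ∈ C) ∧ (∀ k, vs k ∈ regNormalCone ip C (xs k)) ∧
    Tendsto xs atTop (nhds x) ∧ Tendsto vs atTop (nhds v)}

/-- The critical cone `C_f(x,v)`. -/
def criticalCone (ip : E → E → ℝ) (f : E → EReal) (x v : E) : Set E :=
  {w | subderiv f x w = ((ip v w : ℝ) : EReal)}

/-- `f` is locally Lipschitz continuous at `x` relative to its domain. -/
def LocLipAtRelDom (ip : E → E → ℝ) (f : E → EReal) (x : E) : Prop :=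
  IsFiniteAt f x ∧
    ∃ V ∈ nhds x, ∃ ℓ : ℝ, 0 ≤ ℓ ∧
      ∀ a ∈ V, ∀ b ∈ V, f a ≠ ⊤ → f b ≠ ⊤ →
        f a ≠ ⊥ ∧ f b ≠ ⊥ ∧ |(f a).toReal - (f b).toReal| ≤ ℓ * nrm ip (a - b)

/-- `f` is locally Lipschitz continuous relative to its domain. -/
def LocLipRelDom (ip : E → E → ℝ) (f : E → EReal) : Prop :=
  ∀ x : E, f x ≠ ⊤ → LocLipAtRelDom ip f x

/-- `v` is a proximal subgradient of `f` at `x`. -/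
def ProxSubgrad (ip : E → E → ℝ) (f : E → EReal) (x v : E) : Prop :=
  IsFiniteAt f x ∧
    ∃ r > (0 : ℝ), ∃ ε > (0 : ℝ), ∀ x' : E, nrm ip (x' - x) ≤ ε →
      f x + ((ip v (x' - x) - r / 2 * ip (x' - x) (x' - x) : ℝ) : EReal) ≤ f x'

/-- `f` is prox-regular at `x` for `v`. -/
def ProxRegularAtFor (ip : E → E → ℝ) (f : E → EReal) (x v : E) : Prop :=
  IsFiniteAt f x ∧
    (∃ δ > (0 : ℝ), LowerSemicontinuousOn f {x' | nrm ip (x' - x) < δ}) ∧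
    ∃ ε > (0 : ℝ), ∃ r : ℝ, 0 ≤ r ∧
      ∀ x₁ v₁ : E, LimSubgrad ip f x₁ v₁ → nrm ip (x₁ - x) < ε → nrm ip (v₁ - v) < ε →
        f x₁ < f x + (ε : EReal) →
        ∀ x' : E, nrm ip (x' - x) < ε →
          f x₁ + ((ip v₁ (x' - x₁) - r / 2 * ip (x' - x₁) (x' - x₁) : ℝ) : EReal) ≤ f x'

/-- `f` is prox-regular at `x` (for every subgradient). -/
def ProxRegularAt (ip : E → E → ℝ) (f : E → EReal) (x : E) : Prop :=
  ∀ v : E, LimSubgrad ip f x v → ProxRegularAtFor ip f x v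

/-- `f` is subdifferentially continuous at `x`. -/
def SubdiffContAt (ip : E → E → ℝ) (f : E → EReal) (x : E) : Prop :=
  ∀ v : E, LimSubgrad ip f x v →
    ∀ xs vs : ℕ → E, (∀ k, LimSubgrad ip f (xs k) (vs k)) →
      Tendsto xs atTop (nhds x) → Tendsto vs atTop (nhds v) →
      Tendsto (fun k => f (xs k)) atTop (nhds (f x))

/-- `f` is prox-bounded. -/
def ProxBounded (ip : E → E → ℝ) (f : E → EReal) : Prop :=
  ∃ α c : ℝ, ∀ x : E, (c : EReal) ≤ f x + ((α * ip x x : ℝ) : EReal)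

/-- The proximal mapping (as a set of minimizers). -/
def proxSet (ip : E → E → ℝ) (f : E → EReal) (γ : ℝ) (x : E) : Set E :=
  {w | ∀ w' : E,
    f w + ((1 / (2 * γ) * ip (w - x) (w - x) : ℝ) : EReal) ≤
      f w' + ((1 / (2 * γ) * ip (w' - x) (w' - x) : ℝ) : EReal)}

/-- The proximal map of `f` with parameter `γ` is single-valued around `z` and the resulting
map is directionally differentiable at `z`. -/
def ProxSingleDirDiff (ip : E → E → ℝ) (f : E → EReal) (γ : ℝ) (z : E) : Prop :=
  ∃ V ∈ nhds z, ∃ P : E → E, (∀ u ∈ V, proxSet ip f γ u = {P u}) ∧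
    ∀ h : E, ∃ L : E,
      Tendsto (fun t : ℝ => t⁻¹ • (P (z + t • h) - P z)) (nhdsWithin 0 (Set.Ioi 0)) (nhds L)

/-- The parabolic difference quotient. -/
noncomputable def parabQuot (f : E → EReal) (x w : E) (t : ℝ) (z : E) : EReal :=
  (((2 / t ^ 2) : ℝ) : EReal) *
    (f (x + t • w + (t ^ 2 / 2) • z) - f x - ((t * (subderiv f x w).toReal : ℝ) : EReal))

/-- The parabolic subderivative `d²f(x)(w | z)`. -/
noncomputable def parabSubderiv (f : E → EReal) (x w z : E) : EReal :=
  Filter.liminf (fun p : ℝ × E => parabQuot f x w p.1 p.2)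
    ((nhdsWithin (0 : ℝ) (Set.Ioi 0)) ×ˢ nhds z)

/-- `f` is parabolically epi-differentiable at `x` for `w`. -/
def ParabEpiDiff (f : E → EReal) (x w : E) : Prop :=
  (∃ z : E, parabSubderiv f x w z < ⊤) ∧
    ∀ t : ℕ → ℝ, (∀ k, 0 < t k) → Tendsto t atTop (nhds 0) →
      ∀ z : E, ∃ zs : ℕ → E, Tendsto zs atTop (nhds z) ∧
        Tendsto (fun k => parabQuot f x w (t k) (zs k)) atTop (nhds (parabSubderiv f x w z))

/-- `φ` is a generalized quadratic form: its domain is a linear subspace and on the domain it is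
given by a symmetric linear operator. -/
def IsGQF (ip : E → E → ℝ) (φ : E → EReal) : Prop :=
  (φ 0 ≠ ⊤) ∧
  (∀ x y : E, φ x ≠ ⊤ → φ y ≠ ⊤ → φ (x + y) ≠ ⊤) ∧
  (∀ (c : ℝ) (x : E), φ x ≠ ⊤ → φ (c • x) ≠ ⊤) ∧
  ∃ L : E → E,
    (∀ x y : E, φ x ≠ ⊤ → φ y ≠ ⊤ → L (x + y) = L x + L y) ∧
    (∀ (c : ℝ) (x : E), φ x ≠ ⊤ → L (c • x) = c • L x) ∧
    (∀ x y : E, φ x ≠ ⊤ → φ y ≠ ⊤ → ip (L x) y = ip x (L y)) ∧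
    (∀ x : E, φ x ≠ ⊤ → φ x = ((ip (L x) x : ℝ) : EReal))

/-- `f` is generalized twice differentiable at `x` for `v`. -/
def GenTwiceDiff (ip : E → E → ℝ) (f : E → EReal) (x v : E) : Prop :=
  TwiceEpiDiff ip f x v ∧ IsGQF ip (subderiv2 ip f x v)

/-- Proto-differentiability of a set-valued map `F` at `x` for `y ∈ F x`. -/
def ProtoDiff (F : E → Set E) (x y : E) : Prop :=
  ∀ w η : E, (w, η) ∈ tangentCone {p : E × E | p.2 ∈ F p.1} (x, y) →
    ∀ t : ℕ → ℝ, (∀ k, 0 < t k) → Tendsto t atTop (nhds 0) →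
      ∃ ws ηs : ℕ → E, Tendsto ws atTop (nhds w) ∧ Tendsto ηs atTop (nhds η) ∧
        ∀ k, y + t k • ηs k ∈ F (x + t k • ws k)

/-- Relative interior of a set (interior relative to its affine hull). -/
def relInterior (C : Set E) : Set E :=
  {y | y ∈ C ∧ ∃ V ∈ nhds y, ∀ z ∈ V, z ∈ affineSpan ℝ C → z ∈ C}

/-- A polyhedral set: the intersection of finitely many closed half-spaces. -/
def IsPolyhedral (ip : E → E → ℝ) (C : Set E) : Prop :=
  ∃ (k : ℕ) (a : Fin k → E) (b : Fin k → ℝ), C = {x | ∀ j : Fin k, ip (a j) x ≤ b j}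

/-- The subdifferential of a convex function. -/
def convexSubdiff (ip : E → E → ℝ) (f : E → EReal) (x : E) : Set E :=
  {v | ∀ z : E, f x + ((ip v (z - x) : ℝ) : EReal) ≤ f z}

/-- The natural inner product on `E × ℝ`. -/
def ipProd (ip : E → E → ℝ) : E × ℝ → E × ℝ → ℝ :=
  fun p q => ip p.1 q.1 + p.2 * q.2

/-- The epigraph of `f`. -/
def epiSet (f : E → EReal) : Set (E × ℝ) :=
  {p | f p.1 ≤ (p.2 : EReal)}

/-- `f` is subdifferentially regular at `x`. -/
def SubdiffRegularAt (ip : E → E → ℝ) (f : E → EReal) (x : E) : Prop :=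
  IsFiniteAt f x ∧
    regNormalCone (ipProd ip) (epiSet f) (x, (f x).toReal) =
      limNormalCone (ipProd ip) (epiSet f) (x, (f x).toReal)

/-! Real-valued versions: semidifferentiability, gradients. -/

/-- `f` is semidifferentiable at `x`. -/
def SemiDiffAt (f : E → ℝ) (x : E) : Prop :=
  ∀ w : E, ∃ d : ℝ,
    Tendsto (fun p : ℝ × E => (p.1)⁻¹ * (f (x + p.1 • p.2) - f x))
      ((nhdsWithin (0 : ℝ) (Set.Ioi 0)) ×ˢ nhds w) (nhds d)

/-- The (real value of the) subderivative of a real-valued function. -/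
noncomputable def dReal (f : E → ℝ) (x w : E) : ℝ :=
  (subderiv (fun y => ((f y : ℝ) : EReal)) x w).toReal

/-- The second-order difference quotient built from the subderivative. -/
noncomputable def sdq2R (f : E → ℝ) (x : E) (t : ℝ) (w : E) : ℝ :=
  (2 / t ^ 2) * (f (x + t • w) - f x - t * dReal f x w)

/-- `f` is twice semidifferentiable at `x`. -/
def TwiceSemiDiffAt (f : E → ℝ) (x : E) : Prop :=
  SemiDiffAt f x ∧
    ∀ w : E, ∃ d : ℝ,
      Tendsto (fun p : ℝ × E => sdq2R f x p.1 p.2)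
        ((nhdsWithin (0 : ℝ) (Set.Ioi 0)) ×ˢ nhds w) (nhds d)

/-- The second semiderivative `d²f(x)(w)` (the liminf; it is the full limit whenever `f` is
twice semidifferentiable at `x`). -/
noncomputable def secondSemiDeriv (f : E → ℝ) (x w : E) : EReal :=
  Filter.liminf (fun p : ℝ × E => ((sdq2R f x p.1 p.2 : ℝ) : EReal))
    ((nhdsWithin (0 : ℝ) (Set.Ioi 0)) ×ˢ nhds w)

/-- `f` is (Fréchet) differentiable at `x` with gradient `g` (w.r.t. inner product `ip`). -/
def HasGradAt (ip : E → E → ℝ) (f : E → ℝ) (x g : E) : Prop :=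
  Tendsto (fun y : E => (nrm ip (y - x))⁻¹ * (f y - f x - ip g (y - x)))
    (nhdsWithin x {x}ᶜ) (nhds 0)

/-- `f` is locally Lipschitz continuous around `x`. -/
def LocLipAt (ip : E → E → ℝ) (f : E → ℝ) (x : E) : Prop :=
  ∃ V ∈ nhds x, ∃ ℓ : ℝ, 0 ≤ ℓ ∧ ∀ a ∈ V, ∀ b ∈ V, |f a - f b| ≤ ℓ * nrm ip (a - b)

/-- `f` is twice differentiable at `x` with gradient map `G` near `x` and second derivative
(the derivative of `G` at `x`) given by the linear map `Dxx`. -/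
def HasSecondDerivAt (ip : E → E → ℝ) (f : E → EReal) (x : E) (G : E → E) (Dxx : E → E) :
    Prop :=
  ∃ V ∈ nhds x, ∃ fr : E → ℝ,
    (∀ z ∈ V, f z = ((fr z : ℝ) : EReal)) ∧
    (∀ z ∈ V, HasGradAt ip fr z (G z)) ∧
    IsLinearMap ℝ Dxx ∧
    Tendsto (fun z : E => (nrm ip (z - x))⁻¹ • (G z - G x - Dxx (z - x)))
      (nhdsWithin x {x}ᶜ) (nhds 0)

/-- `f` is twice differentiable at `x`. -/
def TwiceDiffAt (ip : E → E → ℝ) (f : E → EReal) (x : E) : Prop :=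
  ∃ G Dxx : E → E, HasSecondDerivAt ip f x G Dxx

end Generic

/-! ## Eigenvalues and spectral machinery -/

open scoped Classical in
/-- The eigenvalues of a real symmetric matrix, arranged in nonincreasing order
(junk value `0` if the matrix is not symmetric). -/
noncomputable def eigval {n : ℕ} (X : Matrix (Fin n) (Fin n) ℝ) : Fin n → ℝ :=
  if h : X.IsHermitian then
    fun i => h.eigenvalues (Tuple.sort (fun j => -h.eigenvalues j) i)
  else 0

/-- `Oⁿ(X)`: orthogonal matrices realizing the ordered spectral decomposition of `X`. -/
def eigOrth {n : ℕ} (X : Matrix (Fin n) (Fin n) ℝ) : Set (Matrix (Fin n) (Fin n) ℝ) :=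
  {U | U * Uᵀ = 1 ∧ X = U * Matrix.diagonal (eigval X) * Uᵀ}

open scoped Classical in
/-- The block `α_m` of indices `j` whose eigenvalue `λ_j(X)` equals `λ_i(X)`. -/
noncomputable def blockSet {n : ℕ} (X : Matrix (Fin n) (Fin n) ℝ) (i : Fin n) :
    Finset (Fin n) :=
  Finset.univ.filter fun j => eigval X j = eigval X i

lemma mem_blockSet_self {n : ℕ} (X : Matrix (Fin n) (Fin n) ℝ) (i : Fin n) :
    i ∈ blockSet X i := by
  simp [blockSet]

/-- The increasing enumeration of the block of `i`. -/
noncomputable def blockEmb {n : ℕ} (X : Matrix (Fin n) (Fin n) ℝ) (i : Fin n) :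
    Fin (blockSet X i).card → Fin n :=
  fun a => ((blockSet X i).orderIsoOfFin rfl a : Fin n)

/-- The position of `i` inside its own block. -/
noncomputable def blockIdx {n : ℕ} (X : Matrix (Fin n) (Fin n) ℝ) (i : Fin n) :
    Fin (blockSet X i).card :=
  ((blockSet X i).orderIsoOfFin rfl).symm ⟨i, mem_blockSet_self X i⟩

/-- The principal submatrix of `M` corresponding to the block of `i` (for `X`). -/
noncomputable def blockMat {n : ℕ} (X M : Matrix (Fin n) (Fin n) ℝ) (i : Fin n) :
    Matrix (Fin (blockSet X i).card) (Fin (blockSet X i).card) ℝ :=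
  Matrix.of fun a b => M (blockEmb X i a) (blockEmb X i b)

/-- The directional derivative `λ'(X;H)` of the ordered eigenvalue map, computed through
`U ∈ Oⁿ(X)`: blockwise ordered eigenvalues of `U_{α_m}ᵀ H U_{α_m}`. -/
noncomputable def lambdaDir {n : ℕ} (X U H : Matrix (Fin n) (Fin n) ℝ) : Fin n → ℝ :=
  fun i => eigval (blockMat X (Uᵀ * H * U) i) (blockIdx X i)

open scoped Classical in
/-- The Moore–Penrose pseudoinverse of a square real matrix, characterized by the four
Penrose equations. -/
noncomputable def pinv {n : ℕ} (A : Matrix (Fin n) (Fin n) ℝ) :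
    Matrix (Fin n) (Fin n) ℝ :=
  if h : ∃ B : Matrix (Fin n) (Fin n) ℝ,
      A * B * A = A ∧ B * A * B = B ∧ (A * B)ᵀ = A * B ∧ (B * A)ᵀ = B * A
  then h.choose else 0

/-- The curvature term `2 ∑ₘ ⟨Diag(y)_{αₘαₘ}, U_{αₘ}ᵀ H (μₘ I - X)† H U_{αₘ}⟩`, written as a
single sum over all indices. -/
noncomputable def curvTerm {n : ℕ} (X U H : Matrix (Fin n) (Fin n) ℝ) (y : Fin n → ℝ) : ℝ :=
  2 * ∑ i : Fin n, y i *
    (Uᵀ * (H * pinv (eigval X i • (1 : Matrix (Fin n) (Fin n) ℝ) - X) * H) * U) i i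

/-- Two symmetric matrices admit a simultaneous ordered spectral decomposition. -/
def simOrdSpec {k : ℕ} (A B : Matrix (Fin k) (Fin k) ℝ) : Prop :=
  ∃ P : Matrix (Fin k) (Fin k) ℝ, P * Pᵀ = 1 ∧
    A = P * Matrix.diagonal (eigval A) * Pᵀ ∧
    B = P * Matrix.diagonal (eigval B) * Pᵀ

/-- The subspace of symmetric `n × n` real matrices. -/
def symSubmodule (n : ℕ) : Submodule ℝ (Matrix (Fin n) (Fin n) ℝ) where
  carrier := {A | A.IsSymm}
  add_mem' := by
    intro a b ha hb
    simp only [Set.mem_setOf_eq, Matrix.IsSymm] at *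
    rw [Matrix.transpose_add, ha, hb]
  zero_mem' := by
    simp only [Set.mem_setOf_eq, Matrix.IsSymm, Matrix.transpose_zero]
  smul_mem' := by
    intro c a ha
    simp only [Set.mem_setOf_eq, Matrix.IsSymm] at *
    rw [Matrix.transpose_smul, ha]

/-- The space `Sⁿ` of symmetric `n × n` real matrices. -/
abbrev Sym (n : ℕ) : Type := ↥(symSubmodule n)

/-- The trace inner product `⟨A, B⟩ = tr(AB)` on `Sⁿ`. -/
noncomputable def ipM {n : ℕ} (A B : Sym n) : ℝ :=
  ((A : Matrix (Fin n) (Fin n) ℝ) * (B : Matrix (Fin n) (Fin n) ℝ)).trace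

/-- The Euclidean inner product on `ℝⁿ`. -/
def ipV {n : ℕ} (v w : Fin n → ℝ) : ℝ :=
  ∑ i, v i * w i

/-- The spectral function `g = θ ∘ λ` on `Sⁿ`. -/
noncomputable def specFn {n : ℕ} (θ : (Fin n → ℝ) → EReal) : Sym n → EReal :=
  fun A => θ (eigval (A : Matrix (Fin n) (Fin n) ℝ))

/-- A function on `ℝⁿ` is symmetric (permutation invariant). -/
def SymmetricFn {n : ℕ} {α : Type*} (θ : (Fin n → ℝ) → α) : Prop :=
  ∀ (x : Fin n → ℝ) (σ : Equiv.Perm (Fin n)), θ (fun i => x (σ i)) = θ x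

/-- The diagonal matrix `Diag(w)` as an element of `Sⁿ`. -/
noncomputable def diagSym {n : ℕ} (w : Fin n → ℝ) : Sym n :=
  ⟨Matrix.diagonal w, Matrix.isSymm_diagonal w⟩

/-- The `i`-th order statistic: `orderStat x i` is the `i`-th largest entry of `x`. -/
noncomputable def orderStat {n : ℕ} (x : Fin n → ℝ) : Fin n → ℝ :=
  fun i => x (Tuple.sort (fun j => -x j) i)

/-!
Orthogonal invariance reduces everything to `X = Diag x` and `Y = Diag y`. If the blocks of `H`
on the fibres of `x` are diagonal with entries `w`, and `y` and `w` are similarly ordered on each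
fibre, then `d²g(X,Y)(H) = d²θ(x,y)(w) + ∑ i j, (y j - y i) / (x j - x i) * H i j ^ 2`: the upper
bound comes from an explicit orthogonal curve through the identity, the lower bound from the trace
inequality together with the Hoffman–Wielandt inequality. Recovery sequences are transported
between `θ` and `g` along the same two constructions.

Comparing the proximal subgradient `Y` with its reflections `R Y Rᵀ`, where `R X Rᵀ = X`, shows
that `d²g(X,Y)(H) < ⊤` forces `H` to have such blocks after conjugation by an orthogonal matrix
commuting with `X` and `Y`, so the formula determines `d²g(X,Y)`. In particular
`d²θ(x,y)(w) = d²g(X,Y)(Diag w)`, so that a generalized quadratic form `d²g` restricts to `d²θ`.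
Conversely, if `d²θ` is `q` on the subspace `S`, then both are invariant under exchanging two
coordinates in the same fibre of `x`. On each fibre the elements of `S` are therefore either all
constant, or arbitrary up to their sum, and then `q` is, modulo the fibre sums, a multiple `γ` of
the squared norm. Replacing that squared norm by the Frobenius norm of the corresponding block of
`H` yields a quadratic form that is invariant under the conjugations above and equals `d²g`.
-/

section SecondSubderivative

lemma two_div_sq_mul_sub_eq_add {a b : EReal} (hb : b ≠ ⊤ ∧ b ≠ ⊥) {t : ℝ} (ht : 0 < t)
    (r s : ℝ) :
    ((2 / t ^ 2 : ℝ) : EReal) * (a - b - ((t * r : ℝ) : EReal)) =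
      ((2 / t ^ 2 : ℝ) : EReal) * (a - b - ((t * s : ℝ) : EReal)) +
        ((2 / t * (s - r) : ℝ) : EReal) := by
  have hc : 0 < 2 / t ^ 2 := by positivity
  lift b to ℝ using hb
  induction a with
  | top => simp only [EReal.top_sub_coe, EReal.coe_mul_top_of_pos hc, EReal.top_add_coe]
  | bot => simp only [EReal.bot_sub, EReal.coe_mul_bot_of_pos hc, EReal.bot_add]
  | coe a => norm_cast; field_simp; ring

lemma sdq2_eq_sdq2_add [AddCommGroup E] [Module ℝ E] {F : Type*} [AddCommGroup F] [Module ℝ F]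
    {ip : E → E → ℝ} {ip' : F → F → ℝ} {f : E → EReal} {f' : F → EReal}
    {x w : E} {x' w' : F} {t : ℝ}
    (hf : IsFiniteAt f x) (ht : 0 < t) (hx : f' x' = f x)
    (hw : f' (x' + t • w') = f (x + t • w)) (v : E) (v' : F) :
    sdq2 ip' f' x' v' t w' =
      sdq2 ip f x v t w + ((2 / t * (ip v w - ip' v' w') : ℝ) : EReal) := by
  rw [sdq2, sdq2, hx, hw, two_div_sq_mul_sub_eq_add hf ht]

lemma neg_mul_le_sdq2 [AddCommGroup E] [Module ℝ E] {ip : E → E → ℝ} {f : E → EReal}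
    {x v w : E} {t r q : ℝ} (hf : IsFiniteAt f x) (ht : 0 < t)
    (h : f x + ((t * ip v w - r / 2 * (t ^ 2 * q) : ℝ) : EReal) ≤ f (x + t • w)) :
    ((-r * q : ℝ) : EReal) ≤ sdq2 ip f x v t w := by
  have hc : 0 < 2 / t ^ 2 := by positivity
  rw [sdq2]
  lift f x to ℝ using hf with fx
  generalize f (x + t • w) = a at h
  induction a with
  | top => simp only [EReal.top_sub_coe, EReal.coe_mul_top_of_pos hc, le_top]
  | bot => exact absurd (le_bot_iff.1 h) (EReal.coe_ne_bot (_ + _))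
  | coe fw =>
    norm_cast at h ⊢
    rw [div_mul_eq_mul_div, le_div_iff₀ (by positivity)]
    linarith

variable [AddCommGroup E] [Module ℝ E] [TopologicalSpace E]
  {ip : E → E → ℝ} {f : E → EReal} {x v w : E} {t : ℕ → ℝ} {ws : ℕ → E}

lemma subderiv2_le_liminf (ht : ∀ k, 0 < t k) (ht0 : Tendsto t atTop (𝓝 0))
    (hws : Tendsto ws atTop (𝓝 w)) :
    subderiv2 ip f x v w ≤ liminf (fun k => sdq2 ip f x v (t k) (ws k)) atTop := by
  have htw : Tendsto (fun k => (t k, ws k)) atTop (𝓝[>] 0 ×ˢ 𝓝 w) :=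
    (tendsto_nhdsWithin_iff.2 ⟨ht0, .of_forall ht⟩).prodMk hws
  exact htw.liminf_le_liminf_comp

lemma exists_seq_sdq2_lt [FirstCountableTopology E] {a : EReal}
    (h : subderiv2 ip f x v w < a) :
    ∃ (t : ℕ → ℝ) (ws : ℕ → E), (∀ k, 0 < t k) ∧ Tendsto t atTop (𝓝 0) ∧
      Tendsto ws atTop (𝓝 w) ∧ ∀ k, sdq2 ip f x v (t k) (ws k) < a := by
  have hpos : ∀ᶠ p : ℝ × E in 𝓝[>] 0 ×ˢ 𝓝 w, 0 < p.1 :=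
    tendsto_fst.eventually self_mem_nhdsWithin
  obtain ⟨p, hp, hlt⟩ := exists_seq_forall_of_frequently
    ((frequently_lt_of_liminf_lt isCobounded_ge_of_top h).and_eventually hpos)
  exact ⟨fun k => (p k).1, fun k => (p k).2, fun k => (hlt k).2,
    (tendsto_fst.comp hp).mono_right nhdsWithin_le_nhds, tendsto_snd.comp hp,
    fun k => (hlt k).1⟩

lemma tendsto_sdq2_of_le (ht : ∀ k, 0 < t k) (ht0 : Tendsto t atTop (𝓝 0))
    (hws : Tendsto ws atTop (𝓝 w)) {u : ℕ → EReal}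
    (hle : ∀ᶠ k in atTop, sdq2 ip f x v (t k) (ws k) ≤ u k)
    (hu : Tendsto u atTop (𝓝 (subderiv2 ip f x v w))) :
    Tendsto (fun k => sdq2 ip f x v (t k) (ws k)) atTop (𝓝 (subderiv2 ip f x v w)) :=
  tendsto_of_le_liminf_of_limsup_le (subderiv2_le_liminf ht ht0 hws)
    ((limsup_le_limsup hle).trans_eq hu.limsup_eq)

lemma tendsto_sdq2_of_subderiv2_eq_top (ht : ∀ k, 0 < t k) (ht0 : Tendsto t atTop (𝓝 0))
    (h : subderiv2 ip f x v w = ⊤) :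
    Tendsto (fun k => sdq2 ip f x v (t k) w) atTop (𝓝 (subderiv2 ip f x v w)) :=
  tendsto_sdq2_of_le ht ht0 tendsto_const_nhds (.of_forall fun _ => le_top)
    (h ▸ tendsto_const_nhds)

end SecondSubderivative

section Isometry

variable [AddCommGroup E] [Module ℝ E] [TopologicalSpace E] {ip : E → E → ℝ} {f : E → EReal}
  {e : E ≃L[ℝ] E}

lemma sdq2_map (hip : ∀ a b, ip (e a) (e b) = ip a b) (hf : ∀ a, f (e a) = f a) (x v : E)
    (t : ℝ) (w : E) : sdq2 ip f (e x) (e v) t (e w) = sdq2 ip f x v t w := by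
  rw [sdq2, ← map_smul, ← map_add, hf, hf, hip, sdq2]

lemma subderiv2_map (hip : ∀ a b, ip (e a) (e b) = ip a b) (hf : ∀ a, f (e a) = f a)
    (x v w : E) : subderiv2 ip f (e x) (e v) (e w) = subderiv2 ip f x v w := by
  have hnhds : 𝓝 (e w) = map e (𝓝 w) := (e.toHomeomorph.map_nhds_eq w).symm
  rw [subderiv2, hnhds, prod_map_right, ← liminf_comp]
  simp only [Function.comp_def, Prod.map_fst, Prod.map_snd, id, sdq2_map hip hf, subderiv2]

lemma TwiceEpiDiff.map (hip : ∀ a b, ip (e a) (e b) = ip a b) (hf : ∀ a, f (e a) = f a)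
    {x v : E} (h : TwiceEpiDiff ip f x v) : TwiceEpiDiff ip f (e x) (e v) := by
  refine ⟨by rw [IsFiniteAt, hf]; exact h.1, fun t ht ht0 w => ?_⟩
  obtain ⟨ws, hws, hlim⟩ := h.2 t ht ht0 (e.symm w)
  refine ⟨fun k => e (ws k), ?_, ?_⟩
  · simpa [Function.comp_def] using (e.continuous.tendsto _).comp hws
  · rw [← e.apply_symm_apply w, subderiv2_map hip hf]
    simpa only [sdq2_map hip hf] using hlim

lemma ProxSubgrad.map (hip : ∀ a b, ip (e a) (e b) = ip a b) (hf : ∀ a, f (e a) = f a)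
    {x v : E} (h : ProxSubgrad ip f x v) : ProxSubgrad ip f (e x) (e v) := by
  obtain ⟨hfin, r, hr, ε, hε, hle⟩ := h
  refine ⟨by rwa [IsFiniteAt, hf], r, hr, ε, hε, fun z hz => ?_⟩
  obtain ⟨z, rfl⟩ := e.surjective z
  rw [nrm, ← map_sub, hip] at hz
  rw [← map_sub, hip, hip, hf, hf]
  exact hle z hz

lemma ProxSubgrad.map_iff (hip : ∀ a b, ip (e a) (e b) = ip a b) (hf : ∀ a, f (e a) = f a)
    {x v : E} : ProxSubgrad ip f (e x) (e v) ↔ ProxSubgrad ip f x v := by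
  refine ⟨fun h => ?_, .map hip hf⟩
  simpa using h.map (e := e.symm)
    (fun a b => by rw [← hip, e.apply_symm_apply, e.apply_symm_apply])
    (fun a => by rw [← hf, e.apply_symm_apply])

end Isometry

section ProximalSubgradient

variable [AddCommGroup E] [Module ℝ E] [TopologicalSpace E] {B : LinearMap.BilinForm ℝ E}
  {f : E → EReal} {x v v' : E}

lemma ProxSubgrad.exists_eventually_le_sdq2 (hB : Continuous fun a => B a a)
    (h : ProxSubgrad (fun a b => B a b) f x v) (w : E) :
    ∃ C : ℝ, ∀ᶠ p in 𝓝[>] 0 ×ˢ 𝓝 w, (C : EReal) ≤ sdq2 (fun a b => B a b) f x v p.1 p.2 := by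
  obtain ⟨hfin, r, hr, ε, hε, hle⟩ := h
  have hfst : Tendsto Prod.fst (𝓝[>] (0 : ℝ) ×ˢ 𝓝 w) (𝓝 0) :=
    tendsto_fst.mono_right nhdsWithin_le_nhds
  have hsnd : Tendsto (fun p : ℝ × E => B p.2 p.2) (𝓝[>] 0 ×ˢ 𝓝 w) (𝓝 (B w w)) :=
    (hB.tendsto w).comp tendsto_snd
  have hsmall : ∀ᶠ p : ℝ × E in 𝓝[>] 0 ×ˢ 𝓝 w, p.1 ^ 2 * B p.2 p.2 < ε ^ 2 := by
    have := (hfst.pow 2).mul hsnd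
    rw [zero_pow two_ne_zero, zero_mul] at this
    exact this.eventually_lt_const (by positivity)
  refine ⟨-r * (B w w + 1), ?_⟩
  filter_upwards [tendsto_fst.eventually self_mem_nhdsWithin, hsmall,
    hsnd.eventually_lt_const (lt_add_one _)] with p hpos hp hBp
  have hball : nrm (fun a b => B a b) (x + p.1 • p.2 - x) ≤ ε := by
    simp only [nrm, add_sub_cancel_left, map_smul, LinearMap.smul_apply, smul_eq_mul]
    exact (Real.sqrt_le_left hε.le).2 (by linarith)
  have hprox := hle _ hball
  simp only [add_sub_cancel_left, map_smul, LinearMap.smul_apply, smul_eq_mul] at hprox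
  have hquot : ((-r * B p.2 p.2 : ℝ) : EReal) ≤ sdq2 (fun a b => B a b) f x v p.1 p.2 :=
    neg_mul_le_sdq2 hfin hpos (by simpa only [sq, mul_assoc] using hprox)
  refine le_trans ?_ hquot
  exact_mod_cast mul_le_mul_of_nonpos_left hBp.le (neg_nonpos.2 hr.le)

lemma ProxSubgrad.apply_le_of_subderiv2_ne_top (hB : Continuous fun a => B a a)
    (hB' : ∀ a, Continuous (B a))
    (hv' : ProxSubgrad (fun a b => B a b) f x v') {w : E}
    (hw : subderiv2 (fun a b => B a b) f x v w ≠ ⊤) : B v' w ≤ B v w := by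
  by_contra! hlt
  obtain ⟨C, hC⟩ := hv'.exists_eventually_le_sdq2 hB w
  have hblow : Tendsto (fun p : ℝ × E => C + 2 / p.1 * (B v' p.2 - B v p.2))
      (𝓝[>] 0 ×ˢ 𝓝 w) atTop := by
    refine tendsto_atTop_add_const_left _ _ (Tendsto.atTop_mul_pos (sub_pos.2 hlt) ?_ ?_)
    · exact (tendsto_inv_nhdsGT_zero.comp tendsto_fst).const_mul_atTop two_pos
    · exact (((hB' v').sub (hB' v)).tendsto w).comp tendsto_snd
  refine hw (Tendsto.liminf_eq (tendsto_nhds_top_mono (EReal.tendsto_coe_nhds_top_iff.2 hblow) ?_))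
  filter_upwards [hC, tendsto_fst.eventually self_mem_nhdsWithin] with p hp hpos
  rw [sdq2_eq_sdq2_add (ip' := fun a b => B a b) hv'.1 hpos rfl rfl v' v, EReal.coe_add]
  gcongr

end ProximalSubgradient

section GeneralizedQuadraticForm

/-- `φ` is the generalized quadratic form that agrees with `q` on the subspace `S` and is `⊤`
elsewhere. This is the coordinate-free version of `IsGQF`, with a quadratic form defined on the
whole space instead of a symmetric operator defined on the domain. -/
def IsQuadOn [AddCommGroup E] [Module ℝ E] (S : Submodule ℝ E) (q : QuadraticForm ℝ E)
    (φ : E → EReal) : Prop :=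
  (∀ x ∈ S, φ x = (q x : ℝ)) ∧ ∀ x ∉ S, φ x = ⊤

variable [AddCommGroup E] [Module ℝ E] {S : Submodule ℝ E} {q : QuadraticForm ℝ E}
  {φ : E → EReal}

lemma IsQuadOn.ne_top_iff (h : IsQuadOn S q φ) {x : E} : φ x ≠ ⊤ ↔ x ∈ S := by
  refine ⟨fun hx => by_contra fun hxS => hx (h.2 x hxS), fun hx => ?_⟩
  rw [h.1 x hx]
  exact EReal.coe_ne_top _

lemma IsQuadOn.comp {F : Type*} [AddCommGroup F] [Module ℝ F] (h : IsQuadOn S q φ)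
    (l : F →ₗ[ℝ] E) : IsQuadOn (S.comap l) (q.comp l) (φ ∘ l) :=
  ⟨fun x hx => h.1 (l x) hx, fun x hx => h.2 (l x) hx⟩

lemma IsGQF.exists_isQuadOn {B : LinearMap.BilinForm ℝ E} (h : IsGQF (fun a b => B a b) φ) :
    ∃ (S : Submodule ℝ E) (q : QuadraticForm ℝ E), IsQuadOn S q φ := by
  obtain ⟨hzero, hadd, hsmul, L, hLadd, hLsmul, -, hL⟩ := h
  let S : Submodule ℝ E :=
    { carrier := {x | φ x ≠ ⊤}
      add_mem' := fun {a b} ha hb => hadd a b ha hb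
      zero_mem' := hzero
      smul_mem' := hsmul }
  let LS : S →ₗ[ℝ] E :=
    { toFun := fun x => L x
      map_add' := fun a b => hLadd a b a.2 b.2
      map_smul' := fun c a => hLsmul c a a.2 }
  obtain ⟨L', hL'⟩ := LS.exists_extend
  refine ⟨S, LinearMap.BilinMap.toQuadraticMap (B.compl₁₂ L' LinearMap.id),
    fun x hx => ?_, fun x hx => ?_⟩
  · have hLx : L' x = L x := LinearMap.congr_fun hL' ⟨x, hx⟩
    rw [hL x hx, LinearMap.BilinMap.toQuadraticMap_apply, LinearMap.compl₁₂_apply, hLx,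
      LinearMap.id_apply]
  · exact not_not.1 hx

lemma IsQuadOn.isGQF [FiniteDimensional ℝ E] {B : LinearMap.BilinForm ℝ E}
    (hB : B.Nondegenerate) (hsymm : B.IsSymm) (h : IsQuadOn S q φ) :
    IsGQF (fun a b => B a b) φ := by
  let A := QuadraticMap.associated (R := ℝ) q
  let L : E →ₗ[ℝ] E := LinearMap.BilinForm.symmCompOfNondegenerate A B hB
  have hL : ∀ a b, B (L a) b = A a b := fun a b =>
    LinearMap.BilinForm.symmCompOfNondegenerate_left_apply A hB b a
  refine ⟨h.ne_top_iff.2 S.zero_mem, fun a b ha hb => ?_, fun c a ha => ?_, L,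
    fun a b _ _ => map_add L a b, fun c a _ => map_smul L c a, fun a b _ _ => ?_, fun a ha => ?_⟩
  · exact h.ne_top_iff.2 (S.add_mem (h.ne_top_iff.1 ha) (h.ne_top_iff.1 hb))
  · exact h.ne_top_iff.2 (S.smul_mem c (h.ne_top_iff.1 ha))
  · calc B (L a) b = A a b := hL a b
      _ = A b a := QuadraticMap.associated_isSymm ℝ q a b
      _ = B a (L b) := by rw [← hL, ← hsymm.eq a]
  · calc φ a = (q a : ℝ) := h.1 a (h.ne_top_iff.1 ha)
      _ = (B (L a) a : ℝ) := by rw [hL, ← QuadraticMap.associated_eq_self_apply ℝ q a]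

end GeneralizedQuadraticForm

section Isometry

variable [AddCommGroup E] [Module ℝ E] [TopologicalSpace E] [FiniteDimensional ℝ E]
  {B : LinearMap.BilinForm ℝ E} {f : E → EReal} {e : E ≃L[ℝ] E}

lemma GenTwiceDiff.map (hB : B.Nondegenerate) (hsymm : B.IsSymm)
    (he : ∀ a b, B (e a) (e b) = B a b) (hf : ∀ a, f (e a) = f a) {x v : E}
    (h : GenTwiceDiff (fun a b => B a b) f x v) :
    GenTwiceDiff (fun a b => B a b) f (e x) (e v) := by
  obtain ⟨S, q, hq⟩ := h.2.exists_isQuadOn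
  have hcomp : subderiv2 (fun a b => B a b) f (e x) (e v) =
      subderiv2 (fun a b => B a b) f x v ∘ e.symm.toLinearEquiv.toLinearMap := by
    funext w
    exact (congrArg _ (e.apply_symm_apply w)).symm.trans (subderiv2_map he hf x v (e.symm w))
  exact ⟨h.1.map he hf, hcomp ▸ (hq.comp _).isGQF hB hsymm⟩

lemma GenTwiceDiff.map_iff (hB : B.Nondegenerate) (hsymm : B.IsSymm)
    (he : ∀ a b, B (e a) (e b) = B a b) (hf : ∀ a, f (e a) = f a) {x v : E} :
    GenTwiceDiff (fun a b => B a b) f (e x) (e v) ↔ GenTwiceDiff (fun a b => B a b) f x v := by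
  refine ⟨fun h => ?_, .map hB hsymm he hf⟩
  simpa using h.map (e := e.symm) hB hsymm
    (fun a b => by rw [← he, e.apply_symm_apply, e.apply_symm_apply])
    (fun a => by rw [← hf, e.apply_symm_apply])

end Isometry

section CayleyTransform

lemma apply_eq_neg_of_skew {ι : Type*} {K : Matrix ι ι ℝ} (hK : Kᵀ = -K) (i j : ι) :
    K j i = -K i j :=
  congrFun (congrFun hK i) j

variable {ι : Type*} [Fintype ι] [DecidableEq ι] {K : Matrix ι ι ℝ}

lemma isUnit_det_one_sub_of_skew (hK : Kᵀ = -K) : IsUnit (1 - K).det := by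
  have hpos : ((1 - K)ᵀ * (1 - K)).PosDef := by
    have heq : (1 - K)ᵀ * (1 - K) = 1 + Kᴴ * K := by
      rw [conjTranspose_eq_transpose_of_trivial, transpose_sub, transpose_one, hK]
      noncomm_ring
    rw [heq]
    exact PosDef.one.add_posSemidef (posSemidef_conjTranspose_mul_self K)
  have hdet := hpos.det_pos
  rw [det_mul, det_transpose] at hdet
  exact isUnit_iff_ne_zero.2 (mul_self_pos.1 hdet)

lemma cayley_mul_transpose (hK : Kᵀ = -K) :
    (1 - K)⁻¹ * (1 + K) * ((1 - K)⁻¹ * (1 + K))ᵀ = 1 := by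
  have hT : (1 + K)ᵀ = 1 - K := by rw [transpose_add, transpose_one, hK, sub_eq_add_neg]
  have hT' : (1 - K)ᵀ = 1 + K := by rw [← hT, transpose_transpose]
  have hdet := isUnit_det_one_sub_of_skew hK
  have hdet' : IsUnit (1 + K).det := by rwa [← hT', det_transpose]
  have hcomm : (1 + K) * (1 - K) = (1 - K) * (1 + K) := by noncomm_ring
  rw [transpose_mul, hT, transpose_nonsing_inv, hT', mul_assoc, ← mul_assoc (1 + K), hcomm,
    mul_assoc, mul_nonsing_inv _ hdet', mul_one, nonsing_inv_mul _ hdet]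

lemma cayley_eq (hK : Kᵀ = -K) :
    (1 - K)⁻¹ * (1 + K) = 1 + (2 : ℝ) • K + (2 : ℝ) • ((1 - K)⁻¹ * (K * K)) := by
  have hinv := nonsing_inv_mul _ (isUnit_det_one_sub_of_skew hK)
  have hsplit : 1 + K = (1 - K) * (1 + (2 : ℝ) • K) + (2 : ℝ) • (K * K) := by
    simp only [two_smul]
    noncomm_ring
  rw [hsplit, mul_add, ← mul_assoc, hinv, one_mul, mul_smul_comm]

lemma exists_orthogonal_expansion (hK : Kᵀ = -K) :
    ∃ R E : ℝ → Matrix ι ι ℝ, (∀ t, R t * (R t)ᵀ = 1) ∧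
      (∀ t, R t = 1 + t • K + (t ^ 2 / 2) • E t) ∧ Tendsto E (𝓝 0) (𝓝 (K * K)) := by
  have hskew (t : ℝ) : ((t / 2) • K)ᵀ = -((t / 2) • K) := by rw [transpose_smul, hK, smul_neg]
  refine ⟨fun t => (1 - (t / 2) • K)⁻¹ * (1 + (t / 2) • K),
    fun t => (1 - (t / 2) • K)⁻¹ * (K * K), fun t => cayley_mul_transpose (hskew t),
    fun t => ?_, ?_⟩
  · dsimp only
    rw [cayley_eq (hskew t), smul_mul_smul, mul_smul_comm]
    module
  · have hA : Continuous fun t : ℝ => 1 - (t / 2) • K := by fun_prop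
    have hinv : ContinuousAt (fun t : ℝ => (1 - (t / 2) • K)⁻¹) 0 := by
      simp only [inv_def, Ring.inverse_eq_inv']
      exact (hA.matrix_det.continuousAt.inv₀ (by simp)).smul hA.matrix_adjugate.continuousAt
    have hlim : Tendsto (fun t : ℝ => (1 - (t / 2) • K)⁻¹ * (K * K)) (𝓝 0)
        (𝓝 ((1 - ((0 : ℝ) / 2) • K)⁻¹ * (K * K))) := hinv.tendsto.mul tendsto_const_nhds
    simpa using hlim

end CayleyTransform

section ConjugationExpansion

variable {ι : Type*} [Fintype ι]

/-- The second-order term, multiplied by `2 / t ^ 2`, of `R * V * Rᵀ` as a function of `t`, when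
`R = 1 + t • K + (t ^ 2 / 2) • E`. -/
def conjRem (K E V : Matrix ι ι ℝ) (t : ℝ) : Matrix ι ι ℝ :=
  (2 : ℝ) • (K * V * Kᵀ) + E * V + V * Eᵀ + t • (K * V * Eᵀ + E * V * Kᵀ) +
    (t ^ 2 / 2) • (E * V * Eᵀ)

lemma conj_eq_add_conjRem [DecidableEq ι] {K E V R : Matrix ι ι ℝ} {t : ℝ}
    (hR : R = 1 + t • K + (t ^ 2 / 2) • E) :
    R * V * Rᵀ = V + t • (K * V + V * Kᵀ) + (t ^ 2 / 2) • conjRem K E V t := by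
  rw [hR, conjRem]
  simp only [transpose_add, transpose_smul, transpose_one, add_mul, mul_add, smul_mul_assoc,
    mul_smul_comm, smul_add, smul_smul, one_mul, mul_one]
  module

lemma tendsto_conjRem {α : Type*} {l : Filter α} {K E V : Matrix ι ι ℝ} {t : α → ℝ}
    {Es Vs : α → Matrix ι ι ℝ} (ht : Tendsto t l (𝓝 0)) (hE : Tendsto Es l (𝓝 E))
    (hV : Tendsto Vs l (𝓝 V)) :
    Tendsto (fun k => conjRem K (Es k) (Vs k) (t k)) l
      (𝓝 ((2 : ℝ) • (K * V * Kᵀ) + E * V + V * Eᵀ)) := by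
  have hcont : Continuous fun p : Matrix ι ι ℝ × Matrix ι ι ℝ × ℝ =>
      conjRem K p.1 p.2.1 p.2.2 := by
    unfold conjRem
    fun_prop
  simpa [conjRem, Function.comp_def] using
    (hcont.tendsto (E, V, 0)).comp (hE.prodMk_nhds (hV.prodMk_nhds ht))

variable [DecidableEq ι]

lemma trace_mul_diagonal (A : Matrix ι ι ℝ) (d : ι → ℝ) :
    (A * diagonal d).trace = ∑ i, A i i * d i := by
  simp [trace, mul_diagonal]

lemma trace_diagonal_mul (A : Matrix ι ι ℝ) (d : ι → ℝ) :
    (diagonal d * A).trace = ∑ i, d i * A i i := by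
  simp [trace, diagonal_mul]

lemma trace_commutator_mul_diagonal {K : Matrix ι ι ℝ} (hK : Kᵀ = -K) (v x : ι → ℝ) :
    ((K * diagonal v + diagonal v * Kᵀ) * diagonal x).trace = 0 := by
  have hdiag (i : ι) : K i i = 0 := by linarith [apply_eq_neg_of_skew hK i i]
  simp [trace_mul_diagonal, mul_diagonal, diagonal_mul, hdiag]

-- The matrix on the left is the double commutator `[K, [K, diagonal v]]`.
lemma trace_double_commutator_mul_diagonal {K : Matrix ι ι ℝ} (hK : Kᵀ = -K) (v x : ι → ℝ) :
    (((2 : ℝ) • (K * diagonal v * Kᵀ) + K * K * diagonal v + diagonal v * (K * K)ᵀ) *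
      diagonal x).trace = ∑ i, ∑ j, K i j ^ 2 * (v j - v i) * (x i - x j) := by
  have hsq (i j : ι) : K j i ^ 2 = K i j ^ 2 := by rw [apply_eq_neg_of_skew hK i j, neg_sq]
  have hentry : ∀ i, ((2 : ℝ) • (K * diagonal v * Kᵀ) + K * K * diagonal v +
      diagonal v * (K * K)ᵀ) i i = ∑ j, 2 * K i j ^ 2 * (v j - v i) := fun i => by
    simp only [Matrix.add_apply, Matrix.smul_apply, smul_eq_mul, Matrix.mul_apply (N := Kᵀ),
      Matrix.mul_apply (M := K) (N := K), mul_diagonal, diagonal_mul, transpose_apply,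
      Finset.mul_sum, Finset.sum_mul, ← Finset.sum_add_distrib]
    refine Finset.sum_congr rfl fun j _ => ?_
    rw [apply_eq_neg_of_skew hK i j]
    ring
  have hexpand : ∑ i, ∑ j, K i j ^ 2 * (v j - v i) * (x i - x j) =
      ∑ i, ∑ j, K i j ^ 2 * (v j - v i) * x i + ∑ i, ∑ j, K i j ^ 2 * (v i - v j) * x j := by
    simp only [← Finset.sum_add_distrib]
    exact Finset.sum_congr rfl fun i _ => Finset.sum_congr rfl fun j _ => by ring
  rw [trace_mul_diagonal, hexpand, Finset.sum_comm (f := fun i j => K i j ^ 2 * (v i - v j) * x j)]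
  simp only [hentry, hsq, ← Finset.sum_add_distrib, Finset.sum_mul]
  exact Finset.sum_congr rfl fun i _ => Finset.sum_congr rfl fun j _ => by ring

variable {α : Type*} {l : Filter α} {K : Matrix ι ι ℝ} {t : α → ℝ} {R Es : α → Matrix ι ι ℝ}

lemma tendsto_inv_smul_conj_sub {E : Matrix ι ι ℝ} (ht : ∀ k, t k ≠ 0) (ht0 : Tendsto t l (𝓝 0))
    (hR : ∀ k, R k = 1 + t k • K + (t k ^ 2 / 2) • Es k) (hE : Tendsto Es l (𝓝 E))
    (V : Matrix ι ι ℝ) {D : Matrix ι ι ℝ} {Ds : α → Matrix ι ι ℝ} (hD : Tendsto Ds l (𝓝 D)) :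
    Tendsto (fun k => (t k)⁻¹ • (R k * (V + t k • Ds k) * (R k)ᵀ - V)) l
      (𝓝 (D + (K * V + V * Kᵀ))) := by
  have hV : Tendsto (fun k => V + t k • Ds k) l (𝓝 V) := by
    simpa using tendsto_const_nhds.add (ht0.smul hD)
  have hfirst : Tendsto (fun k => K * (V + t k • Ds k) + (V + t k • Ds k) * Kᵀ) l
      (𝓝 (K * V + V * Kᵀ)) :=
    (tendsto_const_nhds.mul hV).add (hV.mul tendsto_const_nhds)
  have hrem := (ht0.div_const 2).smul (tendsto_conjRem (K := K) ht0 hE hV)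
  have hsum := (hD.add hfirst).add hrem
  rw [zero_div, zero_smul, add_zero] at hsum
  refine hsum.congr fun k => ?_
  have htk := ht k
  rw [conj_eq_add_conjRem (hR k)]
  match_scalars <;> field_simp
  ring

lemma tendsto_trace_conj_sub_mul (hK : Kᵀ = -K) (ht : ∀ k, t k ≠ 0) (ht0 : Tendsto t l (𝓝 0))
    (hR : ∀ k, R k = 1 + t k • K + (t k ^ 2 / 2) • Es k) (hE : Tendsto Es l (𝓝 (K * K)))
    (v x : ι → ℝ) {B : Matrix ι ι ℝ} {Bs : α → Matrix ι ι ℝ} (hB : Tendsto Bs l (𝓝 B)) :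
    Tendsto (fun k => 2 / t k ^ 2 *
      ((R k * diagonal v * (R k)ᵀ - diagonal v) * (diagonal x + t k • Bs k)).trace) l
      (𝓝 (2 * ((K * diagonal v + diagonal v * Kᵀ) * B).trace +
        ∑ i, ∑ j, K i j ^ 2 * (v j - v i) * (x i - x j))) := by
  have htr : Continuous (trace : Matrix ι ι ℝ → ℝ) := continuous_id.matrix_trace
  have hx : Tendsto (fun k => diagonal x + t k • Bs k) l (𝓝 (diagonal x)) := by
    simpa using tendsto_const_nhds.add (ht0.smul hB)
  have hfirst := ((htr.tendsto _).comp
    ((tendsto_const_nhds (x := K * diagonal v + diagonal v * Kᵀ)).mul hB)).const_mul 2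
  have hsecond := (htr.tendsto _).comp
    ((tendsto_conjRem (K := K) ht0 hE (tendsto_const_nhds (x := diagonal v))).mul hx)
  rw [trace_double_commutator_mul_diagonal hK] at hsecond
  refine (hfirst.add hsecond).congr fun k => ?_
  have hcomm := trace_commutator_mul_diagonal hK v x
  rw [conj_eq_add_conjRem (hR k), add_assoc, add_sub_cancel_left]
  generalize K * diagonal v + diagonal v * Kᵀ = C at hcomm ⊢
  simp only [Function.comp_apply, add_mul (t k • C), smul_mul_assoc, mul_add C, mul_smul_comm,
    trace_add, trace_smul, hcomm, smul_eq_mul, zero_add]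
  field_simp [ht k]

end ConjugationExpansion

section SpectralDecomposition

variable {ι : Type*} [Fintype ι] [DecidableEq ι]

lemma conj_submatrix_diagonal_comp (Q : Matrix ι ι ℝ) (d : ι → ℝ) (τ : Equiv.Perm ι) :
    Q.submatrix id τ * diagonal (d ∘ τ) * (Q.submatrix id τ)ᵀ = Q * diagonal d * Qᵀ := by
  have hτ : diagonal (d ∘ τ) = (diagonal d).submatrix τ τ := (submatrix_diagonal_equiv d τ).symm
  rw [hτ, submatrix_mul_equiv, transpose_submatrix, submatrix_mul_equiv, submatrix_id_id]

lemma submatrix_mul_transpose_eq_one {Q : Matrix ι ι ℝ} (hQ : Q * Qᵀ = 1) (τ : Equiv.Perm ι) :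
    Q.submatrix id τ * (Q.submatrix id τ)ᵀ = 1 := by
  rw [transpose_submatrix, submatrix_mul_equiv, hQ, submatrix_id_id]

lemma exists_eq_conj_diagonal {M : Matrix ι ι ℝ} (hM : M.IsSymm) :
    ∃ (Q : Matrix ι ι ℝ) (d : ι → ℝ), Q * Qᵀ = 1 ∧ M = Q * diagonal d * Qᵀ := by
  have hH : M.IsHermitian := (conjTranspose_eq_transpose_of_trivial M).trans hM
  refine ⟨hH.eigenvectorUnitary, hH.eigenvalues, ?_, ?_⟩
  · rw [← conjTranspose_eq_transpose_of_trivial]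
    exact Unitary.mul_star_self_of_mem hH.eigenvectorUnitary.2
  · rw [← conjTranspose_eq_transpose_of_trivial]
    exact hH.spectral_theorem

lemma exists_eq_conj_diagonal_monotone {n : ℕ} (σ : Equiv.Perm (Fin n))
    {M : Matrix (Fin n) (Fin n) ℝ} (hM : M.IsSymm) :
    ∃ (Q : Matrix (Fin n) (Fin n) ℝ) (d : Fin n → ℝ), Q * Qᵀ = 1 ∧ M = Q * diagonal d * Qᵀ ∧
      Monotone (d ∘ σ) := by
  obtain ⟨Q, d, hQ, rfl⟩ := exists_eq_conj_diagonal hM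
  let τ : Equiv.Perm (Fin n) := σ.symm.trans (Tuple.sort d)
  refine ⟨Q.submatrix id τ, d ∘ τ, submatrix_mul_transpose_eq_one hQ τ,
    (conj_submatrix_diagonal_comp Q d τ).symm, ?_⟩
  have hsort : (d ∘ τ) ∘ σ = d ∘ Tuple.sort d := by
    funext i
    simp [τ]
  exact hsort ▸ Tuple.monotone_sort d

lemma trace_conj_diagonal_mul_conj_diagonal (R Q : Matrix ι ι ℝ) (v d : ι → ℝ) :
    (R * diagonal v * Rᵀ * (Q * diagonal d * Qᵀ)).trace =
      ∑ i, ∑ j, (Rᵀ * Q) i j ^ 2 * (v i * d j) := by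
  have hcycle : (R * diagonal v * Rᵀ * (Q * diagonal d * Qᵀ)).trace =
      (diagonal v * (Rᵀ * Q * diagonal d * (Rᵀ * Q)ᵀ)).trace := by
    rw [transpose_mul, transpose_transpose, mul_assoc, mul_assoc, trace_mul_comm R]
    simp only [mul_assoc]
  rw [hcycle, trace_diagonal_mul]
  refine Finset.sum_congr rfl fun i _ => ?_
  rw [Matrix.mul_apply, Finset.mul_sum]
  refine Finset.sum_congr rfl fun j _ => ?_
  rw [mul_diagonal, transpose_apply]
  ring

lemma sq_mem_doublyStochastic {M : Matrix ι ι ℝ} (hM : M * Mᵀ = 1) :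
    (of fun i j => M i j ^ 2) ∈ doublyStochastic ℝ ι := by
  have hM' : Mᵀ * M = 1 := mul_eq_one_comm.1 hM
  refine mem_doublyStochastic_iff_sum.2 ⟨fun i j => sq_nonneg _, fun i => ?_, fun j => ?_⟩
  · simpa [Matrix.mul_apply, sq] using congrFun (congrFun hM i) i
  · simpa [Matrix.mul_apply, sq] using congrFun (congrFun hM' j) j

lemma sum_mul_le_sum_mul_of_mem_doublyStochastic {S : Matrix ι ι ℝ}
    (hS : S ∈ doublyStochastic ℝ ι) {v d : ι → ℝ} (hvd : Monovary v d) :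
    ∑ i, ∑ j, S i j * (v i * d j) ≤ ∑ i, v i * d i := by
  obtain ⟨w, hw, hw1, rfl⟩ := exists_eq_sum_perm_of_mem_doublyStochastic hS
  calc ∑ i, ∑ j, (∑ σ, w σ • Equiv.Perm.permMatrix ℝ σ) i j * (v i * d j)
      = ∑ σ, w σ * ∑ i, v i * d (σ i) := by
        simp only [Matrix.sum_apply, Matrix.smul_apply, PEquiv.toMatrix_apply, smul_eq_mul,
          Finset.sum_mul, Finset.mul_sum]
        rw [Finset.sum_congr rfl fun i _ => Finset.sum_comm, Finset.sum_comm]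
        simp [eq_comm]
    _ ≤ ∑ σ, w σ * ∑ i, v i * d i :=
        Finset.sum_le_sum fun σ _ =>
          mul_le_mul_of_nonneg_left hvd.sum_mul_comp_perm_le_sum_mul (hw σ)
    _ = ∑ i, v i * d i := by rw [← Finset.sum_mul, hw1, one_mul]

-- The von Neumann trace inequality.
lemma trace_conj_diagonal_mul_conj_diagonal_le {R Q : Matrix ι ι ℝ} (hR : R * Rᵀ = 1)
    (hQ : Q * Qᵀ = 1) {v d : ι → ℝ} (hvd : Monovary v d) :
    (R * diagonal v * Rᵀ * (Q * diagonal d * Qᵀ)).trace ≤ ∑ i, v i * d i := by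
  have horth : Rᵀ * Q * (Rᵀ * Q)ᵀ = 1 := by
    rw [transpose_mul, transpose_transpose, mul_assoc, ← mul_assoc Q, hQ, one_mul,
      mul_eq_one_comm.1 hR]
  rw [trace_conj_diagonal_mul_conj_diagonal]
  exact sum_mul_le_sum_mul_of_mem_doublyStochastic (sq_mem_doublyStochastic horth) hvd

lemma trace_conj_diagonal_sq {Q : Matrix ι ι ℝ} (hQ : Q * Qᵀ = 1) (d : ι → ℝ) :
    (Q * diagonal d * Qᵀ * (Q * diagonal d * Qᵀ)).trace = ∑ i, d i ^ 2 := by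
  rw [trace_conj_diagonal_mul_conj_diagonal, mul_eq_one_comm.1 hQ]
  simp [Matrix.one_apply, sq]

-- The Hoffman–Wielandt inequality.
lemma sum_sub_sq_le_trace_sub_sq {R Q : Matrix ι ι ℝ} (hR : R * Rᵀ = 1) (hQ : Q * Qᵀ = 1)
    {v d : ι → ℝ} (hvd : Monovary v d) :
    ∑ i, (v i - d i) ^ 2 ≤ ((R * diagonal v * Rᵀ - Q * diagonal d * Qᵀ) *
      (R * diagonal v * Rᵀ - Q * diagonal d * Qᵀ)).trace := by
  have hle := trace_conj_diagonal_mul_conj_diagonal_le hR hQ hvd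
  have hsum : ∑ i, (v i - d i) ^ 2 = ∑ i, v i ^ 2 - 2 * ∑ i, v i * d i + ∑ i, d i ^ 2 := by
    rw [Finset.mul_sum, ← Finset.sum_sub_distrib, ← Finset.sum_add_distrib]
    exact Finset.sum_congr rfl fun i _ => by ring
  rw [sub_mul, mul_sub, mul_sub, trace_sub, trace_sub, trace_sub,
    trace_mul_comm (Q * diagonal d * Qᵀ) (R * diagonal v * Rᵀ), trace_conj_diagonal_sq hR,
    trace_conj_diagonal_sq hQ, hsum]
  linarith

end SpectralDecomposition

section Sorting

variable {n : ℕ}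

lemma exists_perm_monotone_lex {x y w : Fin n → ℝ}
    (h : ∀ i j, x i = x j → 0 ≤ (y i - y j) * (w i - w j)) :
    ∃ σ : Equiv.Perm (Fin n), Monotone (x ∘ σ) ∧
      ∀ i j, i ≤ j → x (σ i) = x (σ j) → y (σ i) ≤ y (σ j) ∧ w (σ i) ≤ w (σ j) := by
  let key : Fin n → ℝ ×ₗ ℝ ×ₗ ℝ := fun i => toLex (x i, toLex (y i, w i))
  have hkey (i j : Fin n) (hij : i ≤ j) := Tuple.monotone_sort key hij
  simp only [key, Function.comp, Prod.Lex.toLex_le_toLex] at hkey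
  refine ⟨Tuple.sort key, fun i j hij => ?_, fun i j hij hx => ?_⟩
  · exact (hkey i j hij).elim le_of_lt fun heq => heq.1.le
  · rcases hkey i j hij with hlt | ⟨-, hy | ⟨hy, hw⟩⟩
    · exact absurd hx hlt.ne
    · exact ⟨hy.le, by nlinarith [h _ _ hx]⟩
    · exact ⟨hy.le, hw⟩

lemma eventually_monotone_add_smul {x y : Fin n → ℝ} {σ : Equiv.Perm (Fin n)}
    (hx : Monotone (x ∘ σ))
    (hy : ∀ i j, i ≤ j → x (σ i) = x (σ j) → y (σ i) ≤ y (σ j)) :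
    ∀ᶠ c : ℝ in atTop, Monotone ((y + c • x) ∘ σ) := by
  simp only [Monotone, eventually_all]
  intro i j hij
  simp only [Function.comp_apply, Pi.add_apply, Pi.smul_apply, smul_eq_mul]
  rcases (hx hij).lt_or_eq with hlt | heq
  · filter_upwards [eventually_ge_atTop ((y (σ i) - y (σ j)) / (x (σ j) - x (σ i)))] with c hc
    have hlt' : x (σ i) < x (σ j) := hlt
    rw [div_le_iff₀ (sub_pos.2 hlt')] at hc
    linarith
  · filter_upwards with c
    have heq' : x (σ i) = x (σ j) := heq
    linarith [hy i j hij heq', congrArg (c * ·) heq']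

end Sorting

section FiberwiseMatrix

variable {ι κ : Type*}

/-- A matrix that is block diagonal with respect to the partition of the index type into the
fibres of `z`. -/
def IsFiberwise (z : ι → κ) (P : Matrix ι ι ℝ) : Prop :=
  ∀ i j, z i ≠ z j → P i j = 0

variable {z : ι → κ} {P : Matrix ι ι ℝ}

lemma IsFiberwise.transpose (hP : IsFiberwise z P) : IsFiberwise z Pᵀ :=
  fun i j hij => hP j i hij.symm

variable [Fintype ι]

lemma IsFiberwise.hadamard_conj (hP : IsFiberwise z P) {m : Matrix ι ι ℝ}
    (hm : ∀ i i' j j', z i = z i' → z j = z j' → m i j = m i' j') (A : Matrix ι ι ℝ) :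
    m ⊙ (P * A * Pᵀ) = P * (m ⊙ A) * Pᵀ := by
  ext i j
  simp only [hadamard_apply, Matrix.mul_apply, transpose_apply, Finset.mul_sum, Finset.sum_mul]
  refine Finset.sum_congr rfl fun l _ => Finset.sum_congr rfl fun k _ => ?_
  by_cases hik : z i = z k
  · by_cases hjl : z j = z l
    · rw [hm i k j l hik hjl]
      ring
    · simp [hP j l hjl]
  · simp [hP i k hik]

variable [DecidableEq ι]

lemma IsFiberwise.diagonal_mul_comm (hP : IsFiberwise z P) {f : ι → ℝ}
    (hf : ∀ i j, z i = z j → f i = f j) : diagonal f * P = P * diagonal f := by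
  ext i j
  rw [diagonal_mul, mul_diagonal]
  by_cases hij : z i = z j
  · rw [hf i j hij, mul_comm]
  · rw [hP i j hij, mul_zero, zero_mul]

lemma IsFiberwise.conj_diagonal (hP : IsFiberwise z P) (hPP : P * Pᵀ = 1) {f : ι → ℝ}
    (hf : ∀ i j, z i = z j → f i = f j) : P * diagonal f * Pᵀ = diagonal f := by
  rw [← hP.diagonal_mul_comm hf, mul_assoc, hPP, mul_one]

lemma IsFiberwise.sum_mul_conj_apply_self (hP : IsFiberwise z P) (hPP : P * Pᵀ = 1)
    {f : ι → ℝ} (hf : ∀ i j, z i = z j → f i = f j) (A : Matrix ι ι ℝ) :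
    ∑ i, f i * (P * A * Pᵀ) i i = ∑ i, f i * A i i := by
  rw [← trace_diagonal_mul, ← trace_diagonal_mul, ← mul_assoc, ← mul_assoc,
    hP.diagonal_mul_comm hf, trace_mul_comm, ← mul_assoc, ← mul_assoc, mul_eq_one_comm.1 hPP,
    one_mul]

lemma IsFiberwise.sum_mul_conj_apply_sq (hP : IsFiberwise z P) (hPP : P * Pᵀ = 1)
    {m : Matrix ι ι ℝ} (hm : ∀ i i' j j', z i = z i' → z j = z j' → m i j = m i' j')
    (A : Matrix ι ι ℝ) :
    ∑ i, ∑ j, m i j * (P * A * Pᵀ) i j ^ 2 = ∑ i, ∑ j, m i j * A i j ^ 2 := by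
  have htrace (C : Matrix ι ι ℝ) : ∑ i, ∑ j, m i j * C i j ^ 2 = ((m ⊙ C) * Cᵀ).trace := by
    simp [trace, Matrix.mul_apply, sq, mul_assoc]
  have hPP' : Pᵀ * P = 1 := mul_eq_one_comm.1 hPP
  calc ∑ i, ∑ j, m i j * (P * A * Pᵀ) i j ^ 2
      = (P * (m ⊙ A) * Pᵀ * (P * A * Pᵀ)ᵀ).trace := by rw [htrace, hP.hadamard_conj hm]
    _ = (P * (m ⊙ A) * (Pᵀ * P) * Aᵀ * Pᵀ).trace := by
        simp only [transpose_mul, transpose_transpose, mul_assoc]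
    _ = ((m ⊙ A) * Aᵀ).trace := by
        rw [hPP', mul_one, trace_mul_comm, ← mul_assoc, ← mul_assoc, hPP', one_mul]
    _ = ∑ i, ∑ j, m i j * A i j ^ 2 := (htrace A).symm

lemma exists_isFiberwise_eq_conj_diagonal_of_finite [Finite κ]
    {M : Matrix ι ι ℝ} (hM : M.IsSymm) (hz : IsFiberwise z M) :
    ∃ (P : Matrix ι ι ℝ) (w : ι → ℝ), P * Pᵀ = 1 ∧ IsFiberwise z P ∧
      M = P * diagonal w * Pᵀ := by
  classical
  let _ : Fintype κ := Fintype.ofFinite κ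
  let block (k : κ) : Matrix {i // z i = k} {i // z i = k} ℝ := M.submatrix (↑) (↑)
  choose Q d hQ hd using fun k => exists_eq_conj_diagonal (M := block k) (hM.submatrix _)
  let e := Equiv.sigmaFiberEquiv z
  have hMblock : M = (blockDiagonal' block).submatrix e.symm e.symm := by
    rw [← (M.submatrix_id_id), ← e.self_comp_symm, ← submatrix_submatrix]
    congr 1
    ext ⟨k, i, hi⟩ ⟨l, j, hj⟩
    by_cases hkl : k = l
    · subst hkl
      rw [blockDiagonal'_apply_eq]
      rfl
    · rw [blockDiagonal'_apply_ne _ _ _ hkl]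
      exact hz i j fun h => hkl (hi.symm.trans (h.trans hj))
  refine ⟨(blockDiagonal' Q).submatrix e.symm e.symm, (fun p => d p.1 p.2) ∘ e.symm, ?_,
    fun i j => blockDiagonal'_apply_ne Q _ _, ?_⟩
  · rw [transpose_submatrix, submatrix_mul_equiv, blockDiagonal'_transpose, ← blockDiagonal'_mul,
      funext hQ]
    change (blockDiagonal' 1).submatrix e.symm e.symm = 1
    rw [blockDiagonal'_one, submatrix_one_equiv]
  · rw [hMblock, ← submatrix_diagonal_equiv, ← blockDiagonal'_diagonal, transpose_submatrix,
      submatrix_mul_equiv, submatrix_mul_equiv, blockDiagonal'_transpose, ← blockDiagonal'_mul,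
      ← blockDiagonal'_mul, ← funext hd]

lemma exists_isFiberwise_eq_conj_diagonal {M : Matrix ι ι ℝ} (hM : M.IsSymm)
    (hz : IsFiberwise z M) :
    ∃ (P : Matrix ι ι ℝ) (w : ι → ℝ), P * Pᵀ = 1 ∧ IsFiberwise z P ∧
      M = P * diagonal w * Pᵀ := by
  let z' : ι → Set.range z := Set.rangeFactorization z
  have hz' (i j : ι) : z' i ≠ z' j ↔ z i ≠ z j := Subtype.ext_iff.not
  have hfib (A : Matrix ι ι ℝ) : IsFiberwise z' A ↔ IsFiberwise z A := by
    simp only [IsFiberwise, hz']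
  simpa only [hfib] using
    exists_isFiberwise_eq_conj_diagonal_of_finite (z := z') hM ((hfib M).2 hz)

end FiberwiseMatrix

section SymmetricMatrices

variable {n : ℕ}

/-- The trace inner product `ipM` as a bilinear form. -/
def traceForm (n : ℕ) : LinearMap.BilinForm ℝ (Sym n) :=
  LinearMap.mk₂ ℝ ipM (fun A B C => by simp [ipM, add_mul]) (fun c A B => by simp [ipM])
    (fun A B C => by simp [ipM, mul_add]) (fun c A B => by simp [ipM])

/-- The Euclidean inner product `ipV` as a bilinear form. -/
def dotForm (n : ℕ) : LinearMap.BilinForm ℝ (Fin n → ℝ) :=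
  dotProductBilin ℝ ℝ

lemma traceForm_isSymm : (traceForm n).IsSymm :=
  ⟨fun A B => trace_mul_comm A.val B.val⟩

lemma dotForm_isSymm : (dotForm n).IsSymm :=
  ⟨fun a b => dotProduct_comm a b⟩

lemma traceForm_nondegenerate : (traceForm n).Nondegenerate := by
  refine traceForm_isSymm.isRefl.nondegenerate_iff_separatingLeft.2 fun A hA => ?_
  have htrace : (A.valᴴ * A.val).trace = 0 := by
    rw [conjTranspose_eq_transpose_of_trivial, A.2]
    exact hA A
  exact Subtype.ext (trace_conjTranspose_mul_self_eq_zero_iff.1 htrace)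

lemma dotForm_nondegenerate : (dotForm n).Nondegenerate :=
  dotForm_isSymm.isRefl.nondegenerate_iff_separatingLeft.2 fun a ha =>
    dotProduct_self_eq_zero.1 (ha a)

lemma continuous_ipM_self : Continuous fun A : Sym n => ipM A A := by
  unfold ipM
  fun_prop

lemma isSymm_conj {ι : Type*} [Fintype ι] {A : Matrix ι ι ℝ} (hA : A.IsSymm)
    (U : Matrix ι ι ℝ) : (U * A * Uᵀ).IsSymm := by
  rw [IsSymm, transpose_mul, transpose_mul, transpose_transpose, hA, mul_assoc]

/-- The congruence `A ↦ U A Uᵀ` on the space of symmetric matrices. -/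
def congrSym (U : Matrix (Fin n) (Fin n) ℝ) : Sym n →ₗ[ℝ] Sym n where
  toFun A := ⟨U * A.val * Uᵀ, isSymm_conj A.2 U⟩
  map_add' A B := Subtype.ext (by simp [mul_add, add_mul])
  map_smul' c A := Subtype.ext (by simp)

lemma congrSym_comp_transpose {U : Matrix (Fin n) (Fin n) ℝ} (hU : U * Uᵀ = 1) :
    congrSym U ∘ₗ congrSym Uᵀ = LinearMap.id := by
  ext1 A
  refine Subtype.ext ?_
  change U * (Uᵀ * A.val * Uᵀᵀ) * Uᵀ = A.val
  rw [transpose_transpose, ← mul_assoc, ← mul_assoc, hU, one_mul, mul_assoc, hU, mul_one]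

variable {U : Matrix (Fin n) (Fin n) ℝ}

/-- Conjugation by an orthogonal matrix, as an automorphism of the space of symmetric
matrices. -/
def conjSym (hU : U * Uᵀ = 1) : Sym n ≃L[ℝ] Sym n :=
  (LinearEquiv.ofLinearMap (congrSym U) (congrSym Uᵀ) (congrSym_comp_transpose hU)
    (congrSym_comp_transpose (U := Uᵀ) (mul_eq_one_comm.1 hU))).toContinuousLinearEquiv

lemma conjSym_val (hU : U * Uᵀ = 1) (A : Sym n) : (conjSym hU A).val = U * A.val * Uᵀ := rfl

lemma ipM_conjSym (hU : U * Uᵀ = 1) (A B : Sym n) :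
    ipM (conjSym hU A) (conjSym hU B) = ipM A B := by
  calc (U * A.val * Uᵀ * (U * B.val * Uᵀ)).trace
      = (U * A.val * (Uᵀ * U) * B.val * Uᵀ).trace := by simp only [mul_assoc]
    _ = (A.val * B.val).trace := by
        rw [mul_eq_one_comm.1 hU, mul_one, trace_mul_comm, ← mul_assoc, ← mul_assoc,
          mul_eq_one_comm.1 hU, one_mul]

/-- The diagonal embedding `diagSym` as a linear map. -/
def diagSymLin (n : ℕ) : (Fin n → ℝ) →ₗ[ℝ] Sym n where
  toFun := diagSym
  map_add' a b := Subtype.ext (diagonal_add a b).symm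
  map_smul' c a := Subtype.ext (diagonal_smul c a)

lemma diagSym_add_smul (x w : Fin n → ℝ) (t : ℝ) :
    diagSym x + t • diagSym w = diagSym (x + t • w) :=
  (((diagSymLin n).map_add x (t • w)).trans
    (congrArg (diagSym x + ·) ((diagSymLin n).map_smul t w))).symm

lemma continuous_diagSym : Continuous (diagSym (n := n)) :=
  (diagSymLin n).continuous_of_finiteDimensional

lemma ipM_diagSym (v : Fin n → ℝ) (A : Sym n) : ipM (diagSym v) A = ∑ i, v i * A.val i i :=
  trace_diagonal_mul A.val v

lemma ipM_diagSym_diagSym (v w : Fin n → ℝ) : ipM (diagSym v) (diagSym w) = ipV v w := by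
  rw [ipM_diagSym]
  simp [diagSym, ipV]

end SymmetricMatrices

section SpectralFunction

variable {n : ℕ}

lemma exists_perm_eq_comp_of_map_univ_eq {f g : Fin n → ℝ}
    (h : Finset.univ.val.map f = Finset.univ.val.map g) :
    ∃ σ : Equiv.Perm (Fin n), f = g ∘ σ := by
  have hperm : (List.ofFn f).Perm (List.ofFn g) := by
    simpa only [Fin.univ_val_map, Multiset.coe_eq_coe] using h
  have hsort : f ∘ Tuple.sort f = g ∘ Tuple.sort g := by
    refine List.ofFn_injective (List.Perm.eq_of_pairwise' (r := (· ≤ ·))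
      (Tuple.monotone_sort f).sortedLE_ofFn.pairwise
      (Tuple.monotone_sort g).sortedLE_ofFn.pairwise ?_)
    exact (((Tuple.sort f).ofFn_comp_perm f).trans hperm).trans
      ((Tuple.sort g).ofFn_comp_perm g).symm
  refine ⟨(Tuple.sort f)⁻¹.trans (Tuple.sort g), funext fun i => ?_⟩
  simpa using congrFun hsort ((Tuple.sort f)⁻¹ i)

lemma exists_perm_eq_eigval_comp {Q : Matrix (Fin n) (Fin n) ℝ} (hQ : Q * Qᵀ = 1)
    (d : Fin n → ℝ) :
    ∃ σ : Equiv.Perm (Fin n), eigval (Q * diagonal d * Qᵀ) = d ∘ σ := by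
  have hH : (Q * diagonal d * Qᵀ).IsHermitian :=
    (conjTranspose_eq_transpose_of_trivial _).trans (isSymm_conj (isSymm_diagonal d) Q)
  have hcharpoly : (Q * diagonal d * Qᵀ).charpoly = (diagonal d).charpoly := by
    rw [charpoly_mul_comm, ← mul_assoc, mul_eq_one_comm.1 hQ, one_mul]
  have hroots := hH.roots_charpoly_eq_eigenvalues
  rw [hcharpoly, charpoly_diagonal, Polynomial.roots_prod _ _
    (Finset.prod_ne_zero_iff.2 fun i _ => Polynomial.X_sub_C_ne_zero _)] at hroots
  simp only [Polynomial.roots_X_sub_C, Multiset.bind_singleton] at hroots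
  obtain ⟨σ, hσ⟩ := exists_perm_eq_comp_of_map_univ_eq (f := hH.eigenvalues) (g := d) hroots.symm
  refine ⟨(Tuple.sort fun j => -hH.eigenvalues j).trans σ, funext fun i => ?_⟩
  rw [eigval, dif_pos hH]
  exact congrFun hσ _

variable {θ : (Fin n → ℝ) → EReal}

lemma specFn_of_eq_conj_diagonal (hθ : SymmetricFn θ) {Q : Matrix (Fin n) (Fin n) ℝ}
    (hQ : Q * Qᵀ = 1) {A : Sym n} {d : Fin n → ℝ} (hA : A.val = Q * diagonal d * Qᵀ) :
    specFn θ A = θ d := by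
  obtain ⟨σ, hσ⟩ := exists_perm_eq_eigval_comp hQ d
  rw [specFn, hA, hσ]
  exact hθ d σ

lemma specFn_diagSym (hθ : SymmetricFn θ) (d : Fin n → ℝ) : specFn θ (diagSym d) = θ d :=
  specFn_of_eq_conj_diagonal hθ (Q := 1) (by simp) (by simp [diagSym])

lemma isFiniteAt_specFn_diagSym (hθ : SymmetricFn θ) :
    IsFiniteAt (specFn θ) (diagSym x) ↔ IsFiniteAt θ x := by
  rw [IsFiniteAt, IsFiniteAt, specFn_diagSym hθ]

lemma specFn_conjSym (hθ : SymmetricFn θ) {U : Matrix (Fin n) (Fin n) ℝ} (hU : U * Uᵀ = 1)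
    (A : Sym n) : specFn θ (conjSym hU A) = specFn θ A := by
  obtain ⟨Q, d, hQ, hA⟩ := exists_eq_conj_diagonal A.2
  have hUQ : U * Q * (U * Q)ᵀ = 1 := by
    rw [transpose_mul, mul_assoc, ← mul_assoc Q, hQ, one_mul, hU]
  rw [specFn_of_eq_conj_diagonal hθ hQ hA, specFn_of_eq_conj_diagonal hθ hUQ]
  rw [conjSym_val, hA, transpose_mul]
  simp only [mul_assoc]

lemma subderiv2_specFn_diagSym_le (hθ : SymmetricFn θ) (x y w : Fin n → ℝ) :
    subderiv2 ipM (specFn θ) (diagSym x) (diagSym y) (diagSym w) ≤ subderiv2 ipV θ x y w := by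
  have hsdq (t : ℝ) (w' : Fin n → ℝ) :
      sdq2 ipM (specFn θ) (diagSym x) (diagSym y) t (diagSym w') = sdq2 ipV θ x y t w' := by
    rw [sdq2, diagSym_add_smul, specFn_diagSym hθ, specFn_diagSym hθ, ipM_diagSym_diagSym, sdq2]
  have htendsto : Tendsto (Prod.map id diagSym) (𝓝[>] (0 : ℝ) ×ˢ 𝓝 w)
      (𝓝[>] 0 ×ˢ 𝓝 (diagSym w)) :=
    tendsto_id.prodMap (continuous_diagSym.tendsto w)
  refine htendsto.liminf_le_liminf_comp.trans_eq ?_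
  simp only [Function.comp_def, Prod.map_fst, Prod.map_snd, id, hsdq, subderiv2]

end SpectralFunction

section Perturbation

variable {ι : Type*}

/-- The first-order rotation of the eigenvectors of `diagonal x` under the perturbation `H`.
Entries with `x i = x j` vanish because division by zero gives zero. -/
def rotGen (x : ι → ℝ) (H : Matrix ι ι ℝ) : Matrix ι ι ℝ :=
  of fun i j => H i j / (x j - x i)

/-- The curvature term of the second subderivative of a spectral function: `curvTerm` in the
eigenbasis of `diagonal x`. Pairs with `x i = x j` do not contribute because division by zero
gives zero. -/
def curvQuad [Fintype ι] (x y : ι → ℝ) (H : Matrix ι ι ℝ) : ℝ :=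
  ∑ i, ∑ j, (y j - y i) / (x j - x i) * H i j ^ 2

/-- The diagonal blocks of `H` determined by the fibres of `x` are diagonal, with diagonal
entries `w`. -/
def HasDiagonalBlocks [DecidableEq ι] (x w : ι → ℝ) (H : Matrix ι ι ℝ) : Prop :=
  ∀ i j, x i = x j → H i j = diagonal w i j

lemma transpose_rotGen (x : ι → ℝ) {H : Matrix ι ι ℝ} (hH : H.IsSymm) :
    (rotGen x H)ᵀ = -rotGen x H := by
  ext i j
  rw [transpose_apply, neg_apply, rotGen, of_apply, of_apply, hH.apply, ← div_neg, neg_sub]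

variable [Fintype ι]

lemma sum_rotGen_sq_mul (x v : ι → ℝ) (H : Matrix ι ι ℝ) :
    ∑ i, ∑ j, rotGen x H i j ^ 2 * (v j - v i) * (x i - x j) = -curvQuad x v H := by
  rw [curvQuad, ← Finset.sum_neg_distrib]
  refine Finset.sum_congr rfl fun i _ => ?_
  rw [← Finset.sum_neg_distrib]
  refine Finset.sum_congr rfl fun j _ => ?_
  rcases eq_or_ne (x j - x i) 0 with h | h
  · simp [rotGen, h]
  · rw [rotGen, of_apply]
    field_simp
    ring

variable [DecidableEq ι] {x w : ι → ℝ} {H : Matrix ι ι ℝ}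

lemma conj_rotGen_diagonal_apply (x v : ι → ℝ) (hH : H.IsSymm) (i j : ι) :
    (rotGen x H * diagonal v + diagonal v * (rotGen x H)ᵀ) i j =
      (v j - v i) / (x j - x i) * H i j := by
  rw [transpose_rotGen x hH, mul_neg, ← sub_eq_add_neg, Matrix.sub_apply, mul_diagonal,
    diagonal_mul, rotGen, of_apply]
  ring

lemma HasDiagonalBlocks.diagonal_add_conj_rotGen (h : HasDiagonalBlocks x w H)
    (hH : H.IsSymm) :
    diagonal w + (rotGen x H * diagonal x + diagonal x * (rotGen x H)ᵀ) = H := by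
  ext i j
  rw [Matrix.add_apply, conj_rotGen_diagonal_apply x x hH]
  by_cases hij : x i = x j
  · rw [h i j hij, hij, sub_self, div_zero, zero_mul, add_zero]
  · rw [div_self (sub_ne_zero.2 (Ne.symm hij)), one_mul,
      diagonal_apply_ne _ fun h => hij (congrArg x h), zero_add]

lemma trace_conj_rotGen_mul_self (x v : ι → ℝ) (hH : H.IsSymm) :
    ((rotGen x H * diagonal v + diagonal v * (rotGen x H)ᵀ) * H).trace = curvQuad x v H := by
  rw [trace, curvQuad]
  refine Finset.sum_congr rfl fun i _ => ?_
  rw [diag_apply, Matrix.mul_apply]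
  refine Finset.sum_congr rfl fun j _ => ?_
  rw [conj_rotGen_diagonal_apply x v hH, hH.apply, sq, mul_assoc]

lemma trace_conj_rotGen_mul_diagonal (x v w : ι → ℝ) (hH : H.IsSymm) :
    ((rotGen x H * diagonal v + diagonal v * (rotGen x H)ᵀ) * diagonal w).trace = 0 := by
  rw [trace_mul_diagonal]
  refine Finset.sum_eq_zero fun i _ => ?_
  rw [conj_rotGen_diagonal_apply x v hH, sub_self, zero_div, zero_mul, zero_mul]

lemma HasDiagonalBlocks.curvQuad_add_smul (h : HasDiagonalBlocks x w H) (hH : H.IsSymm)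
    (y : ι → ℝ) (c : ℝ) :
    c * (∑ i, w i ^ 2 - (H * H).trace) + curvQuad x (y + c • x) H = curvQuad x y H := by
  have hentry (i j : ι) : (y j + c * x j - (y i + c * x i)) / (x j - x i) * H i j ^ 2 =
      (y j - y i) / (x j - x i) * H i j ^ 2 + c * (H i j * H j i) - c * diagonal w i j ^ 2 := by
    rw [hH.apply i j]
    by_cases hij : x i = x j
    · rw [hij, sub_self, div_zero, div_zero, h i j hij]
      ring
    · have hne : x j - x i ≠ 0 := sub_ne_zero.2 (Ne.symm hij)
      rw [diagonal_apply_ne _ fun h => hij (congrArg x h)]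
      field_simp
      ring
  have htrace : (H * H).trace = ∑ i, ∑ j, H i j * H j i := by
    simp only [trace, diag_apply, Matrix.mul_apply]
  have hdiag : ∑ i, w i ^ 2 = ∑ i, ∑ j, diagonal w i j ^ 2 := by
    simp [diagonal_apply]
  simp only [curvQuad, Pi.add_apply, Pi.smul_apply, smul_eq_mul, hentry, htrace, hdiag,
    Finset.sum_sub_distrib, Finset.sum_add_distrib, Finset.mul_sum, mul_sub]
  ring

end Perturbation

section GapInequality

variable {ι : Type*} [DecidableEq ι] {H Q R : Matrix ι ι ℝ} {x w : ι → ℝ} {t : ℝ}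

lemma diagonal_add_smul_diagonal (x w : ι → ℝ) (t : ℝ) :
    diagonal x + t • diagonal w = diagonal (x + t • w) := by
  rw [← diagonal_smul, diagonal_add]
  rfl

variable [Fintype ι]

lemma two_mul_sum_mul_sub_eq (ht : t ≠ 0) (hQ : Q * Qᵀ = 1)
    (hH : diagonal x + t • H = Q * diagonal (x + t • w) * Qᵀ) :
    2 * ∑ i, x i * (w i - H i i) = t * ((H * H).trace - ∑ i, w i ^ 2) := by
  have hlhs : ((diagonal x + t • H) * (diagonal x + t • H)).trace =
      ∑ i, x i ^ 2 + 2 * t * ∑ i, x i * H i i + t ^ 2 * (H * H).trace := by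
    simp only [add_mul, mul_add, trace_add, Matrix.mul_smul, Matrix.smul_mul, trace_smul,
      trace_mul_comm H (diagonal x), trace_diagonal_mul, smul_eq_mul, diagonal_apply_eq, sq]
    ring
  have hrhs : ∑ i, (x + t • w) i ^ 2 =
      ∑ i, x i ^ 2 + 2 * t * ∑ i, x i * w i + t ^ 2 * ∑ i, w i ^ 2 := by
    simp only [Finset.mul_sum, ← Finset.sum_add_distrib]
    refine Finset.sum_congr rfl fun i _ => ?_
    rw [Pi.add_apply, Pi.smul_apply, smul_eq_mul]
    ring
  have htrace := trace_conj_diagonal_sq hQ (x + t • w)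
  rw [← hH, hlhs, hrhs] at htrace
  simp only [mul_sub, Finset.sum_sub_distrib]
  exact mul_left_cancel₀ ht (by linarith)

lemma gap_le_of_monovary (ht : 0 < t) (hQ : Q * Qᵀ = 1) (hR : R * Rᵀ = 1)
    (hH : diagonal x + t • H = Q * diagonal (x + t • w) * Qᵀ) {y : ι → ℝ} {c : ℝ}
    (hmono : Monovary (y + c • x) (x + t • w)) :
    c * (∑ i, w i ^ 2 - (H * H).trace) +
        2 / t ^ 2 * ((R * diagonal (y + c • x) * Rᵀ - diagonal (y + c • x)) *
          (diagonal x + t • H)).trace ≤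
      2 / t * (∑ i, y i * w i - ∑ i, y i * H i i) := by
  have hle := trace_conj_diagonal_mul_conj_diagonal_le hR hQ hmono
  have hsum : ∑ i, (y + c • x) i * (x + t • w) i -
      (diagonal (y + c • x) * (diagonal x + t • H)).trace =
      t * (∑ i, y i * w i - ∑ i, y i * H i i) + t * c * ∑ i, x i * (w i - H i i) := by
    rw [trace_diagonal_mul]
    simp only [Finset.mul_sum, ← Finset.sum_add_distrib, ← Finset.sum_sub_distrib]
    refine Finset.sum_congr rfl fun i _ => ?_
    simp only [Pi.add_apply, Pi.smul_apply, Matrix.add_apply, Matrix.smul_apply,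
      diagonal_apply_eq, smul_eq_mul]
    ring
  calc c * (∑ i, w i ^ 2 - (H * H).trace) +
        2 / t ^ 2 * ((R * diagonal (y + c • x) * Rᵀ - diagonal (y + c • x)) *
          (diagonal x + t • H)).trace
      ≤ c * (∑ i, w i ^ 2 - (H * H).trace) +
        2 / t ^ 2 * (t * (∑ i, y i * w i - ∑ i, y i * H i i) +
          t * c * ∑ i, x i * (w i - H i i)) := by
        rw [sub_mul, trace_sub, hH, ← hsum, ← hH]
        gcongr
        exact hH ▸ hle
    _ = 2 / t * (∑ i, y i * w i - ∑ i, y i * H i i) +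
        c / t * (2 * ∑ i, x i * (w i - H i i) - t * ((H * H).trace - ∑ i, w i ^ 2)) := by
        field_simp
        ring
    _ = 2 / t * (∑ i, y i * w i - ∑ i, y i * H i i) := by
        rw [two_mul_sum_mul_sub_eq ht.ne' hQ hH, sub_self, mul_zero, add_zero]

lemma gap_eq_neg_trace (ht : t ≠ 0) (y : ι → ℝ)
    (hH : diagonal x + t • H = R * (diagonal x + t • diagonal w) * Rᵀ) :
    2 / t * (∑ i, y i * w i - ∑ i, y i * H i i) =
      -(2 / t ^ 2 * ((Rᵀ * diagonal y * R - diagonal y) *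
        (diagonal x + t • diagonal w)).trace) := by
  have hcycle : (Rᵀ * diagonal y * R * (diagonal x + t • diagonal w)).trace =
      (diagonal y * (diagonal x + t • H)).trace := by
    rw [hH, mul_assoc, mul_assoc, trace_mul_comm]
    simp only [mul_assoc]
  have hsum : (diagonal y * (diagonal x + t • H)).trace -
      (diagonal y * (diagonal x + t • diagonal w)).trace =
      t * (∑ i, y i * H i i - ∑ i, y i * w i) := by
    simp only [mul_add, Matrix.mul_smul, trace_add, trace_smul, trace_diagonal_mul,
      diagonal_apply_eq, smul_eq_mul]
    ring
  rw [sub_mul, trace_sub, hcycle, hsum]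
  field_simp
  ring

end GapInequality

section EigenvalueExpansion

variable {n : ℕ} {x y w : Fin n → ℝ} {H : Matrix (Fin n) (Fin n) ℝ}
  {t : ℕ → ℝ} {Hs Q R Es : ℕ → Matrix (Fin n) (Fin n) ℝ} {ws : ℕ → Fin n → ℝ}
  {σ : Equiv.Perm (Fin n)}

lemma monovary_of_monotone_comp_perm {v d : Fin n → ℝ} (hv : Monotone (v ∘ σ))
    (hd : Monotone (d ∘ σ)) : Monovary v d := by
  simpa [Function.comp_def] using (hv.monovary hd).comp_right σ.symm

lemma eventually_monotone_add_smul_of_tendsto_zero (hx : Monotone (x ∘ σ))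
    (hw : ∀ i j, i ≤ j → x (σ i) = x (σ j) → w (σ i) ≤ w (σ j))
    (ht : ∀ k, 0 < t k) (ht0 : Tendsto t atTop (𝓝 0)) :
    ∀ᶠ k in atTop, Monotone ((x + t k • w) ∘ σ) := by
  have hinv : Tendsto (fun k => (t k)⁻¹) atTop atTop :=
    (tendsto_nhdsWithin_iff.2 ⟨ht0, .of_forall ht⟩).inv_tendsto_nhdsGT_zero
  filter_upwards [hinv.eventually (eventually_monotone_add_smul hx hw)] with k hk i j hij
  have hle := mul_le_mul_of_nonneg_left (hk hij) (ht k).le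
  simpa [mul_add, (ht k).ne', add_comm] using hle

-- Hoffman–Wielandt against the curve `R t * diagonal (x + t • w) * (R t)ᵀ`, whose velocity
-- at `t = 0` is `H` as well.
lemma tendsto_of_eq_conj_diagonal_add_smul (h : HasDiagonalBlocks x w H) (hH : H.IsSymm)
    (ht : ∀ k, 0 < t k) (ht0 : Tendsto t atTop (𝓝 0)) (hHs : Tendsto Hs atTop (𝓝 H))
    (hQ : ∀ k, Q k * (Q k)ᵀ = 1)
    (hdec : ∀ k, diagonal x + t k • Hs k = Q k * diagonal (x + t k • ws k) * (Q k)ᵀ)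
    (hmono : ∀ᶠ k in atTop, Monovary (x + t k • w) (x + t k • ws k)) :
    Tendsto ws atTop (𝓝 w) := by
  obtain ⟨R, Es, hR, hRexp, hEs⟩ := exists_orthogonal_expansion (transpose_rotGen x hH)
  let A (k : ℕ) := (t k)⁻¹ • (R (t k) * (diagonal x + t k • diagonal w) * (R (t k))ᵀ - diagonal x)
  have hA : Tendsto A atTop (𝓝 H) := by
    rw [← h.diagonal_add_conj_rotGen hH]
    exact tendsto_inv_smul_conj_sub (fun k => (ht k).ne') ht0 (fun k => hRexp (t k))
      (hEs.comp ht0) (diagonal x) tendsto_const_nhds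
  have htrace : Tendsto (fun k => ((A k - Hs k) * (A k - Hs k)).trace) atTop (𝓝 0) := by
    have hsub := hA.sub hHs
    simpa [Function.comp_def] using
      (continuous_id.matrix_trace.tendsto _).comp (hsub.mul hsub)
  have hbound : ∀ᶠ k in atTop, ∑ i, (w i - ws k i) ^ 2 ≤ ((A k - Hs k) * (A k - Hs k)).trace := by
    filter_upwards [hmono] with k hk
    have hne : t k ≠ 0 := (ht k).ne'
    have hdiff : R (t k) * diagonal (x + t k • w) * (R (t k))ᵀ -
        Q k * diagonal (x + t k • ws k) * (Q k)ᵀ = t k • (A k - Hs k) := by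
      rw [← hdec k, smul_sub, smul_inv_smul₀ hne, diagonal_add_smul_diagonal, sub_sub]
    have hsq (i : Fin n) : ((x + t k • w) i - (x + t k • ws k) i) ^ 2 =
        t k ^ 2 * (w i - ws k i) ^ 2 := by
      simp only [Pi.add_apply, Pi.smul_apply, smul_eq_mul]
      ring
    have hHW := sum_sub_sq_le_trace_sub_sq (hR (t k)) (hQ k) hk
    simp only [hdiff, hsq, ← Finset.mul_sum, Matrix.smul_mul, Matrix.mul_smul, smul_smul,
      trace_smul, smul_eq_mul, ← sq (t k)] at hHW
    exact le_of_mul_le_mul_left hHW (pow_pos (ht k) 2)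
  have hsum : Tendsto (fun k => ∑ i, (w i - ws k i) ^ 2) atTop (𝓝 0) :=
    squeeze_zero' (.of_forall fun k => by positivity) hbound htrace
  refine tendsto_pi_nhds.2 fun i => tendsto_iff_norm_sub_tendsto_zero.2 ?_
  refine squeeze_zero (fun _ => norm_nonneg _) (fun k => ?_) (Real.sqrt_zero ▸ hsum.sqrt)
  rw [norm_sub_rev, Real.norm_eq_abs]
  exact Real.abs_le_sqrt (Finset.single_le_sum (f := fun i => (w i - ws k i) ^ 2)
    (fun i _ => sq_nonneg _) (Finset.mem_univ i))

lemma exists_seq_eq_conj_diagonal_add_smul (h : HasDiagonalBlocks x w H) (hH : H.IsSymm)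
    (hyw : ∀ i j, x i = x j → 0 ≤ (y i - y j) * (w i - w j))
    (ht : ∀ k, 0 < t k) (ht0 : Tendsto t atTop (𝓝 0)) (hHs : ∀ k, (Hs k).IsSymm)
    (hlim : Tendsto Hs atTop (𝓝 H)) :
    ∃ (Q : ℕ → Matrix (Fin n) (Fin n) ℝ) (ws : ℕ → Fin n → ℝ) (ℓ : ℕ → ℝ),
      (∀ k, Q k * (Q k)ᵀ = 1) ∧
      (∀ k, diagonal x + t k • Hs k = Q k * diagonal (x + t k • ws k) * (Q k)ᵀ) ∧
      Tendsto ws atTop (𝓝 w) ∧ Tendsto ℓ atTop (𝓝 (curvQuad x y H)) ∧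
      ∀ᶠ k in atTop, ℓ k ≤ 2 / t k * (∑ i, y i * ws k i - ∑ i, y i * Hs k i i) := by
  obtain ⟨σ, hxσ, hσ⟩ := exists_perm_monotone_lex hyw
  obtain ⟨c, hc⟩ := (eventually_monotone_add_smul hxσ fun i j hij hx => (hσ i j hij hx).1).exists
  obtain ⟨R, Es, hR, hRexp, hEs⟩ := exists_orthogonal_expansion (transpose_rotGen x hH)
  choose Q d hQ hdec hd using fun k => exists_eq_conj_diagonal_monotone σ
    ((isSymm_diagonal x).add ((hHs k).smul (t k)))
  obtain ⟨ws, hws⟩ : ∃ ws : ℕ → Fin n → ℝ, ∀ k, d k = x + t k • ws k :=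
    ⟨fun k => (t k)⁻¹ • (d k - x), fun k => by
      rw [smul_inv_smul₀ (ht k).ne', add_sub_cancel]⟩
  simp only [hws] at hdec hd
  have hwlim : Tendsto ws atTop (𝓝 w) := by
    refine tendsto_of_eq_conj_diagonal_add_smul h hH ht ht0 hlim hQ hdec ?_
    filter_upwards [eventually_monotone_add_smul_of_tendsto_zero hxσ
      (fun i j hij hx => (hσ i j hij hx).2) ht ht0] with k hk
    exact monovary_of_monotone_comp_perm hk (hd k)
  have hsq : Tendsto (fun k => ∑ i, ws k i ^ 2) atTop (𝓝 (∑ i, w i ^ 2)) :=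
    tendsto_finsetSum _ fun i _ => (tendsto_pi_nhds.1 hwlim i).pow 2
  have htr : Tendsto (fun k => (Hs k * Hs k).trace) atTop (𝓝 (H * H).trace) :=
    (continuous_id.matrix_trace.tendsto _).comp (hlim.mul hlim)
  have hconj := tendsto_trace_conj_sub_mul (transpose_rotGen x hH) (fun k => (ht k).ne') ht0
    (fun k => hRexp (t k)) (hEs.comp ht0) (y + c • x) x hlim
  refine ⟨Q, ws, _, hQ, hdec, hwlim, ?_, .of_forall fun k =>
    gap_le_of_monovary (ht k) (hQ k) (hR (t k)) (hdec k)
      (monovary_of_monotone_comp_perm hc (hd k))⟩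
  rw [trace_conj_rotGen_mul_self x _ hH, sum_rotGen_sq_mul] at hconj
  rw [← h.curvQuad_add_smul hH y c]
  convert ((hsq.sub htr).const_mul c).add hconj using 2
  ring

lemma exists_seq_conj_diagonal_add_smul (h : HasDiagonalBlocks x w H) (hH : H.IsSymm)
    (y : Fin n → ℝ) (ht : ∀ k, 0 < t k) (ht0 : Tendsto t atTop (𝓝 0))
    (hws : Tendsto ws atTop (𝓝 w)) :
    ∃ Q Hs : ℕ → Matrix (Fin n) (Fin n) ℝ, (∀ k, Q k * (Q k)ᵀ = 1) ∧ (∀ k, (Hs k).IsSymm) ∧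
      (∀ k, diagonal x + t k • Hs k = Q k * diagonal (x + t k • ws k) * (Q k)ᵀ) ∧
      Tendsto Hs atTop (𝓝 H) ∧
      Tendsto (fun k => 2 / t k * (∑ i, y i * ws k i - ∑ i, y i * Hs k i i)) atTop
        (𝓝 (curvQuad x y H)) := by
  obtain ⟨R, Es, hR, hRexp, hEs⟩ := exists_orthogonal_expansion (transpose_rotGen x hH)
  let Hs (k : ℕ) :=
    (t k)⁻¹ • (R (t k) * (diagonal x + t k • diagonal (ws k)) * (R (t k))ᵀ - diagonal x)
  have hdiag : Tendsto (fun k => diagonal (ws k)) atTop (𝓝 (diagonal w)) :=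
    (continuous_id.matrix_diagonal.tendsto w).comp hws
  have hdec (k : ℕ) : diagonal x + t k • Hs k =
      R (t k) * (diagonal x + t k • diagonal (ws k)) * (R (t k))ᵀ := by
    rw [smul_inv_smul₀ (ht k).ne', add_sub_cancel]
  have hsymm (k : ℕ) : (Hs k).IsSymm :=
    ((isSymm_conj ((isSymm_diagonal x).add ((isSymm_diagonal (ws k)).smul (t k))) (R (t k))).sub
      (isSymm_diagonal x)).smul _
  refine ⟨fun k => R (t k), Hs, fun k => hR _, hsymm, fun k => ?_, ?_, ?_⟩
  · rw [hdec, diagonal_add_smul_diagonal]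
  · rw [← h.diagonal_add_conj_rotGen hH]
    exact tendsto_inv_smul_conj_sub (fun k => (ht k).ne') ht0 (fun k => hRexp (t k))
      (hEs.comp ht0) (diagonal x) hdiag
  · have htrans (k : ℕ) : (R (t k))ᵀ = 1 + t k • -rotGen x H + (t k ^ 2 / 2) • (Es (t k))ᵀ := by
      rw [hRexp]
      simp only [transpose_add, transpose_smul, transpose_one, transpose_rotGen x hH]
    have hEsT : Tendsto (fun k => (Es (t k))ᵀ) atTop (𝓝 (-rotGen x H * -rotGen x H)) := by
      rw [← transpose_rotGen x hH, ← transpose_mul]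
      exact (continuous_id.matrix_transpose.tendsto _).comp (hEs.comp ht0)
    have hconj := (tendsto_trace_conj_sub_mul (by rw [transpose_neg, transpose_rotGen x hH])
      (fun k => (ht k).ne') ht0 htrans hEsT y x hdiag).neg
    simp only [gap_eq_neg_trace (ht _).ne' y (hdec _)]
    simpa only [transpose_transpose, transpose_neg, Matrix.neg_mul, Matrix.mul_neg, ← neg_add,
      trace_neg, trace_conj_rotGen_mul_diagonal x y w hH, Matrix.neg_apply, neg_sq,
      sum_rotGen_sq_mul, neg_neg, neg_zero, mul_zero, zero_add] using hconj

end EigenvalueExpansion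

section SecondSubderivativeSpecFn

variable {n : ℕ} {θ : (Fin n → ℝ) → EReal} {x y w : Fin n → ℝ} {H : Sym n} {t : ℕ → ℝ}

instance : FirstCountableTopology (Sym n) :=
  have : FirstCountableTopology (Matrix (Fin n) (Fin n) ℝ) :=
    inferInstanceAs (FirstCountableTopology (Fin n → Fin n → ℝ))
  IsInducing.subtypeVal.firstCountableTopology

lemma tendsto_add_coe {u : ℕ → EReal} {r : ℕ → ℝ} {a : EReal} {c : ℝ}
    (hu : Tendsto u atTop (𝓝 a)) (hr : Tendsto r atTop (𝓝 c)) :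
    Tendsto (fun k => u k + (r k : EReal)) atTop (𝓝 (a + c)) :=
  (EReal.continuousAt_add (p := (a, (c : EReal))) (.inr (EReal.coe_ne_bot c))
    (.inr (EReal.coe_ne_top c))).tendsto.comp (hu.prodMk_nhds (EReal.tendsto_coe.2 hr))

lemma exists_seq_sdq2_add_le_sdq2_specFn (hθ : SymmetricFn θ) (hfin : IsFiniteAt θ x)
    (hH : HasDiagonalBlocks x w H.val)
    (hyw : ∀ i j, x i = x j → 0 ≤ (y i - y j) * (w i - w j))
    (ht : ∀ k, 0 < t k) (ht0 : Tendsto t atTop (𝓝 0)) {Hs : ℕ → Sym n}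
    (hHs : Tendsto Hs atTop (𝓝 H)) :
    ∃ (ws : ℕ → Fin n → ℝ) (ℓ : ℕ → ℝ), Tendsto ws atTop (𝓝 w) ∧
      Tendsto ℓ atTop (𝓝 (curvQuad x y H.val)) ∧
      ∀ᶠ k in atTop, sdq2 ipV θ x y (t k) (ws k) + (ℓ k : EReal) ≤
        sdq2 ipM (specFn θ) (diagSym x) (diagSym y) (t k) (Hs k) := by
  obtain ⟨Q, ws, ℓ, hQ, hdec, hws, hℓ, hle⟩ := exists_seq_eq_conj_diagonal_add_smul hH H.2 hyw
    ht ht0 (fun k => (Hs k).2) (tendsto_subtype_rng.1 hHs)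
  refine ⟨ws, ℓ, hws, hℓ, hle.mono fun k hk => ?_⟩
  rw [sdq2_eq_sdq2_add (ip := ipV) (w := ws k) hfin (ht k) (specFn_diagSym hθ x)
    (specFn_of_eq_conj_diagonal hθ (hQ k) (hdec k)) y, ipM_diagSym]
  gcongr
  exact hk

lemma exists_seq_sdq2_specFn_eq_sdq2_add (hθ : SymmetricFn θ) (hfin : IsFiniteAt θ x)
    (hH : HasDiagonalBlocks x w H.val) (y : Fin n → ℝ)
    (ht : ∀ k, 0 < t k) (ht0 : Tendsto t atTop (𝓝 0)) {ws : ℕ → Fin n → ℝ}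
    (hws : Tendsto ws atTop (𝓝 w)) :
    ∃ (Hs : ℕ → Sym n) (r : ℕ → ℝ), Tendsto Hs atTop (𝓝 H) ∧
      Tendsto r atTop (𝓝 (curvQuad x y H.val)) ∧
      ∀ k, sdq2 ipM (specFn θ) (diagSym x) (diagSym y) (t k) (Hs k) =
        sdq2 ipV θ x y (t k) (ws k) + (r k : EReal) := by
  obtain ⟨Q, Hs, hQ, hsymm, hdec, hHs, hr⟩ :=
    exists_seq_conj_diagonal_add_smul hH H.2 y ht ht0 hws
  let Gs (k : ℕ) : Sym n := ⟨Hs k, hsymm k⟩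
  refine ⟨Gs, _, tendsto_subtype_rng.2 hHs, hr, fun k => ?_⟩
  rw [sdq2_eq_sdq2_add (ip := ipV) (w := ws k) (w' := Gs k) hfin (ht k) (specFn_diagSym hθ x)
    (specFn_of_eq_conj_diagonal hθ (hQ k) (hdec k)) y, ipM_diagSym]
  rfl

lemma subderiv2_specFn_eq_add_curvQuad (hθ : SymmetricFn θ) (hfin : IsFiniteAt θ x)
    (hH : HasDiagonalBlocks x w H.val)
    (hyw : ∀ i j, x i = x j → 0 ≤ (y i - y j) * (w i - w j)) :
    subderiv2 ipM (specFn θ) (diagSym x) (diagSym y) H =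
      subderiv2 ipV θ x y w + (curvQuad x y H.val : EReal) := by
  apply le_antisymm
  · refine EReal.sub_le_iff_le_add (.inl (EReal.coe_ne_bot _)) (.inl (EReal.coe_ne_top _)) |>.1
      (le_of_forall_gt_imp_ge_of_dense fun a ha => ?_)
    obtain ⟨t, ws, ht, ht0, hws, hlt⟩ := exists_seq_sdq2_lt ha
    obtain ⟨Hs, r, hHs, hr, heq⟩ := exists_seq_sdq2_specFn_eq_sdq2_add hθ hfin hH y ht ht0 hws
    rw [EReal.sub_le_iff_le_add (.inl (EReal.coe_ne_bot _)) (.inl (EReal.coe_ne_top _)),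
      ← (tendsto_add_coe tendsto_const_nhds hr).liminf_eq]
    refine (subderiv2_le_liminf ht ht0 hHs).trans (liminf_le_liminf (.of_forall fun k => ?_))
    rw [heq]
    gcongr
    exact (hlt k).le
  · refine le_of_forall_gt_imp_ge_of_dense fun a ha => ?_
    obtain ⟨t, Hs, ht, ht0, hHs, hlt⟩ := exists_seq_sdq2_lt ha
    obtain ⟨ws, ℓ, hws, hℓ, hle⟩ :=
      exists_seq_sdq2_add_le_sdq2_specFn hθ hfin hH hyw ht ht0 hHs
    calc subderiv2 ipV θ x y w + (curvQuad x y H.val : EReal)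
        ≤ liminf (fun k => sdq2 ipV θ x y (t k) (ws k)) atTop +
          liminf (fun k => (ℓ k : EReal)) atTop := by
          rw [(EReal.tendsto_coe.2 hℓ).liminf_eq]
          gcongr
          exact subderiv2_le_liminf ht ht0 hws
      _ ≤ liminf (fun k => sdq2 ipV θ x y (t k) (ws k) + (ℓ k : EReal)) atTop :=
          EReal.le_liminf_add
      _ ≤ liminf (fun _ => a) atTop :=
          liminf_le_liminf (hle.mono fun k hk => hk.trans (hlt k).le)
      _ = a := liminf_const a

lemma curvQuad_diagonal {ι : Type*} [Fintype ι] [DecidableEq ι] (x y w : ι → ℝ) :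
    curvQuad x y (diagonal w) = 0 := by
  refine Finset.sum_eq_zero fun i _ => Finset.sum_eq_zero fun j _ => ?_
  rcases eq_or_ne i j with rfl | hij
  · rw [sub_self, zero_div, zero_mul]
  · rw [diagonal_apply_ne _ hij, zero_pow two_ne_zero, mul_zero]

lemma subderiv2_specFn_diagSym (hθ : SymmetricFn θ) (hfin : IsFiniteAt θ x)
    (hyw : ∀ i j, x i = x j → 0 ≤ (y i - y j) * (w i - w j)) :
    subderiv2 ipM (specFn θ) (diagSym x) (diagSym y) (diagSym w) = subderiv2 ipV θ x y w := by
  rw [subderiv2_specFn_eq_add_curvQuad hθ hfin (fun _ _ _ => rfl) hyw]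
  change _ + (curvQuad x y (diagonal w) : EReal) = _
  rw [curvQuad_diagonal, EReal.coe_zero, add_zero]

lemma exists_recovery_specFn (hθ : SymmetricFn θ) (hepi : TwiceEpiDiff ipV θ x y)
    (hH : HasDiagonalBlocks x w H.val)
    (hyw : ∀ i j, x i = x j → 0 ≤ (y i - y j) * (w i - w j))
    (ht : ∀ k, 0 < t k) (ht0 : Tendsto t atTop (𝓝 0)) :
    ∃ Hs : ℕ → Sym n, Tendsto Hs atTop (𝓝 H) ∧
      Tendsto (fun k => sdq2 ipM (specFn θ) (diagSym x) (diagSym y) (t k) (Hs k)) atTop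
        (𝓝 (subderiv2 ipM (specFn θ) (diagSym x) (diagSym y) H)) := by
  obtain ⟨ws, hws, hlim⟩ := hepi.2 t ht ht0 w
  obtain ⟨Hs, r, hHs, hr, heq⟩ := exists_seq_sdq2_specFn_eq_sdq2_add hθ hepi.1 hH y ht ht0 hws
  refine ⟨Hs, hHs, ?_⟩
  simp only [heq, subderiv2_specFn_eq_add_curvQuad hθ hepi.1 hH hyw]
  exact tendsto_add_coe hlim hr

lemma exists_recovery_of_specFn (hθ : SymmetricFn θ)
    (hepi : TwiceEpiDiff ipM (specFn θ) (diagSym x) (diagSym y))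
    (hyw : ∀ i j, x i = x j → 0 ≤ (y i - y j) * (w i - w j))
    (ht : ∀ k, 0 < t k) (ht0 : Tendsto t atTop (𝓝 0)) :
    ∃ ws : ℕ → Fin n → ℝ, Tendsto ws atTop (𝓝 w) ∧
      Tendsto (fun k => sdq2 ipV θ x y (t k) (ws k)) atTop (𝓝 (subderiv2 ipV θ x y w)) := by
  have hfin : IsFiniteAt θ x := (isFiniteAt_specFn_diagSym hθ).1 hepi.1
  obtain ⟨Hs, hHs, hlim⟩ := hepi.2 t ht ht0 (diagSym w)
  obtain ⟨ws, ℓ, hws, hℓ, hle⟩ :=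
    exists_seq_sdq2_add_le_sdq2_specFn hθ hfin (fun _ _ _ => rfl) hyw ht ht0 hHs
  refine ⟨ws, hws, tendsto_sdq2_of_le ht ht0 hws (u := fun k =>
    sdq2 ipM (specFn θ) (diagSym x) (diagSym y) (t k) (Hs k) + ((-ℓ k : ℝ) : EReal)) ?_ ?_⟩
  · filter_upwards [hle] with k hk
    rw [EReal.coe_neg, ← sub_eq_add_neg]
    exact EReal.le_sub_iff_add_le (.inl (EReal.coe_ne_bot _)) (.inl (EReal.coe_ne_top _)) |>.2 hk
  · have hℓ0 : Tendsto ℓ atTop (𝓝 0) := curvQuad_diagonal x y w ▸ hℓ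
    simpa [subderiv2_specFn_diagSym hθ hfin hyw] using tendsto_add_coe hlim hℓ0.neg

end SecondSubderivativeSpecFn

section Reflection

variable {ι : Type*} [Fintype ι]

lemma trace_vecMulVec_mul (u v : ι → ℝ) (A : Matrix ι ι ℝ) :
    (vecMulVec u v * A).trace = v ⬝ᵥ A *ᵥ u := by
  rw [vecMulVec_mul, trace_vecMulVec, dotProduct_comm, dotProduct_mulVec]

variable [DecidableEq ι]

/-- The orthogonal reflection in the hyperplane orthogonal to `u ≠ 0` (a Householder matrix). -/
def reflMatrix (u : ι → ℝ) : Matrix ι ι ℝ :=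
  1 - (2 / (u ⬝ᵥ u)) • vecMulVec u u

lemma transpose_reflMatrix (u : ι → ℝ) : (reflMatrix u)ᵀ = reflMatrix u := by
  rw [reflMatrix, transpose_sub, transpose_smul, transpose_vecMulVec, transpose_one]

lemma reflMatrix_mul_transpose {u : ι → ℝ} (hu : u ⬝ᵥ u ≠ 0) :
    reflMatrix u * (reflMatrix u)ᵀ = 1 := by
  rw [transpose_reflMatrix]
  simp only [reflMatrix, sub_mul, mul_sub, one_mul, mul_one, Matrix.smul_mul, Matrix.mul_smul,
    vecMulVec_mul_vecMulVec, vecMulVec_smul, smul_smul]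
  match_scalars
  · ring
  · field_simp
    ring

lemma trace_conj_reflMatrix_mul {u : ι → ℝ} (hu : u ⬝ᵥ u ≠ 0) (A B : Matrix ι ι ℝ) :
    (reflMatrix u * A * (reflMatrix u)ᵀ * B).trace = (A * B).trace +
      2 / (u ⬝ᵥ u) ^ 2 * (2 * ((u ⬝ᵥ A *ᵥ u) * (u ⬝ᵥ B *ᵥ u)) -
        (u ⬝ᵥ u) * (u ⬝ᵥ (A * B + B * A) *ᵥ u)) := by
  have hVV : (vecMulVec u u * A * vecMulVec u u * B).trace = (u ⬝ᵥ A *ᵥ u) * (u ⬝ᵥ B *ᵥ u) := by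
    rw [mul_assoc (vecMulVec u u), mul_vecMulVec, vecMulVec_mul_vecMulVec, vecMulVec_smul,
      Matrix.smul_mul, trace_smul, trace_vecMulVec_mul, smul_eq_mul]
  have hAVB : (A * vecMulVec u u * B).trace = u ⬝ᵥ (B * A) *ᵥ u := by
    rw [mul_assoc, trace_mul_comm, mul_assoc, trace_vecMulVec_mul]
  have hVAB : (vecMulVec u u * A * B).trace = u ⬝ᵥ (A * B) *ᵥ u := by
    rw [mul_assoc, trace_vecMulVec_mul]
  rw [transpose_reflMatrix]
  simp only [reflMatrix, sub_mul, mul_sub, one_mul, mul_one,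
    Matrix.smul_mul, Matrix.mul_smul, trace_sub, trace_smul, smul_eq_mul, hVV, hAVB, hVAB,
    add_mulVec, dotProduct_add]
  field_simp
  ring

end Reflection

section CriticalDirections

variable {n : ℕ} {θ : (Fin n → ℝ) → EReal} {x y : Fin n → ℝ} {H : Sym n}

lemma conjSym_diagSym_of_isFiberwise {κ : Type*} {z : Fin n → κ} {P : Matrix (Fin n) (Fin n) ℝ}
    (hP : IsFiberwise z P) (hPP : P * Pᵀ = 1) {f : Fin n → ℝ}
    (hf : ∀ i j, z i = z j → f i = f j) : conjSym hPP (diagSym f) = diagSym f :=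
  Subtype.ext (hP.conj_diagonal hPP hf)

lemma ipM_conjSym_le_of_subderiv2_ne_top (hθ : SymmetricFn θ)
    (hprox : ProxSubgrad ipM (specFn θ) (diagSym x) (diagSym y))
    (hH : subderiv2 ipM (specFn θ) (diagSym x) (diagSym y) H ≠ ⊤)
    {P : Matrix (Fin n) (Fin n) ℝ} (hPP : P * Pᵀ = 1) (hP : IsFiberwise x P) :
    ipM (conjSym hPP (diagSym y)) H ≤ ipM (diagSym y) H := by
  have hprox' := hprox.map (ipM_conjSym hPP) (specFn_conjSym hθ hPP)
  rw [conjSym_diagSym_of_isFiberwise hP hPP fun _ _ h => h] at hprox'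
  exact ProxSubgrad.apply_le_of_subderiv2_ne_top (B := traceForm n) continuous_ipM_self
    (fun A => LinearMap.continuous_of_finiteDimensional _) hprox' hH

lemma isFiberwise_reflMatrix {ι κ : Type*} [Fintype ι] [DecidableEq ι] {z : ι → κ} {i j : ι}
    (hz : z i = z j) (a b : ℝ) : IsFiberwise z (reflMatrix (Pi.single i a + Pi.single j b)) := by
  intro k l hkl
  have hne : k ≠ l := fun h => hkl (congrArg z h)
  have hprod : (Pi.single i a + Pi.single j b : ι → ℝ) k *
      (Pi.single i a + Pi.single j b : ι → ℝ) l = 0 := by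
    simp only [Pi.add_apply, Pi.single_apply]
    grind
  rw [reflMatrix, Matrix.sub_apply, Matrix.smul_apply, vecMulVec_apply, hprod, smul_zero,
    Matrix.one_apply_ne hne, sub_zero]

lemma reflection_ineq_of_subderiv2_ne_top (hθ : SymmetricFn θ)
    (hprox : ProxSubgrad ipM (specFn θ) (diagSym x) (diagSym y))
    (hH : subderiv2 ipM (specFn θ) (diagSym x) (diagSym y) H ≠ ⊤) {i j : Fin n}
    (hx : x i = x j) (hij : i ≠ j) (b : ℝ) :
    b * ((y i - y j) * H.val i j) * (1 - b ^ 2) ≤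
      b ^ 2 * ((y i - y j) * (H.val i i - H.val j j)) := by
  let u : Fin n → ℝ := Pi.single i 1 + Pi.single j b
  have hform (A : Matrix (Fin n) (Fin n) ℝ) :
      u ⬝ᵥ A *ᵥ u = A i i + b * (A i j + A j i) + b ^ 2 * A j j := by
    simp only [u, mulVec_add, add_dotProduct, dotProduct_add, mulVec_single, single_dotProduct,
      Pi.smul_apply, col_apply, MulOpposite.smul_eq_mul_unop, MulOpposite.unop_op]
    ring
  have hnorm : u ⬝ᵥ u = 1 + b ^ 2 := by
    simpa [hij, hij.symm] using hform 1
  have hpos : 0 < u ⬝ᵥ u := by rw [hnorm]; positivity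
  have hle := ipM_conjSym_le_of_subderiv2_ne_top hθ hprox hH
    (reflMatrix_mul_transpose hpos.ne') (isFiberwise_reflMatrix hx 1 b)
  change (reflMatrix u * diagonal y * (reflMatrix u)ᵀ * H.val).trace ≤
    (diagonal y * H.val).trace at hle
  rw [trace_conj_reflMatrix_mul hpos.ne', add_le_iff_nonpos_right,
    mul_nonpos_iff_pos_imp_nonpos] at hle
  have hquad := hle.1 (by positivity)
  simp only [hform, hnorm, Matrix.add_apply, diagonal_mul, mul_diagonal, diagonal_apply_eq,
    diagonal_apply_ne _ hij, diagonal_apply_ne _ hij.symm, IsSymm.apply H.2 i j] at hquad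
  linarith

lemma mul_sub_apply_self_nonneg_of_subderiv2_ne_top (hθ : SymmetricFn θ)
    (hprox : ProxSubgrad ipM (specFn θ) (diagSym x) (diagSym y))
    (hH : subderiv2 ipM (specFn θ) (diagSym x) (diagSym y) H ≠ ⊤) {i j : Fin n}
    (hx : x i = x j) : 0 ≤ (y i - y j) * (H.val i i - H.val j j) := by
  rcases eq_or_ne i j with rfl | hij
  · simp
  · simpa using reflection_ineq_of_subderiv2_ne_top hθ hprox hH hx hij 1

lemma mul_apply_eq_zero_of_subderiv2_ne_top (hθ : SymmetricFn θ)
    (hprox : ProxSubgrad ipM (specFn θ) (diagSym x) (diagSym y))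
    (hH : subderiv2 ipM (specFn θ) (diagSym x) (diagSym y) H ≠ ⊤) {i j : Fin n}
    (hx : x i = x j) : (y i - y j) * H.val i j = 0 := by
  rcases eq_or_ne i j with rfl | hij
  · rw [sub_self, zero_mul]
  set p := (y i - y j) * H.val i j
  set q := (y i - y j) * (H.val i i - H.val j j)
  have hmax : IsLocalMax (fun b : ℝ => b * p * (1 - b ^ 2) - b ^ 2 * q) 0 :=
    .of_forall fun b => by
      simpa using reflection_ineq_of_subderiv2_ne_top hθ hprox hH hx hij b
  have hderiv : HasDerivAt (fun b : ℝ => b * p * (1 - b ^ 2) - b ^ 2 * q) p 0 := by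
    have hid := hasDerivAt_id (0 : ℝ)
    exact (((hid.mul_const p).mul ((hid.pow 2).const_sub 1)).sub
      ((hid.pow 2).mul_const q)).congr_deriv (by simp)
  exact hmax.hasDerivAt_eq_zero hderiv

lemma exists_isFiberwise_hasDiagonalBlocks {ι : Type*} [Fintype ι] [DecidableEq ι]
    {x y : ι → ℝ} {H : Matrix ι ι ℝ} (hH : H.IsSymm)
    (hyH : ∀ i j, x i = x j → (y i - y j) * H i j = 0) :
    ∃ (P : Matrix ι ι ℝ) (w : ι → ℝ), P * Pᵀ = 1 ∧ IsFiberwise (fun i => (x i, y i)) P ∧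
      HasDiagonalBlocks x w (Pᵀ * H * P) := by
  let m : Matrix ι ι ℝ := of fun i j => if x i = x j then 1 else 0
  have hm : (m ⊙ H).IsSymm := by
    ext i j
    simp only [m, transpose_apply, hadamard_apply, of_apply, hH.apply, eq_comm]
  have hz : IsFiberwise (fun i => (x i, y i)) (m ⊙ H) := by
    intro i j hij
    simp only [m, hadamard_apply, of_apply]
    split_ifs with hx
    · have hy : y i - y j ≠ 0 := sub_ne_zero.2 fun hy => hij (Prod.ext hx hy)
      rw [one_mul, (mul_eq_zero.1 (hyH i j hx)).resolve_left hy]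
    · rw [zero_mul]
  obtain ⟨P, w, hPP, hP, hdec⟩ := exists_isFiberwise_eq_conj_diagonal hm hz
  refine ⟨P, w, hPP, hP, fun i j hx => ?_⟩
  have hconj : m ⊙ (Pᵀ * H * P) = diagonal w := by
    have hhad := hP.transpose.hadamard_conj (m := m) (fun i i' j j' hi hj => by
      have hxi : x i = x i' := congrArg Prod.fst hi
      have hxj : x j = x j' := congrArg Prod.fst hj
      simp only [m, of_apply, hxi, hxj]) H
    rw [transpose_transpose, hdec] at hhad
    rw [hhad, ← mul_assoc, ← mul_assoc, mul_eq_one_comm.1 hPP, one_mul, mul_assoc,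
      mul_eq_one_comm.1 hPP, mul_one]
  simpa [m, hx] using congrFun (congrFun hconj i) j

end CriticalDirections

section BlockSymmetricForms

variable {ι κ : Type*}

/-- The block of `i` is rigid for `S`: every vector of `S` is constant on it. -/
def IsRigid (c : ι → κ) (S : Submodule ℝ (ι → ℝ)) (i : ι) : Prop :=
  ∀ w ∈ S, ∀ j, c j = c i → w j = w i

variable {c : ι → κ} {S : Submodule ℝ (ι → ℝ)} {q : QuadraticForm ℝ (ι → ℝ)} {i j k l : ι}

lemma IsRigid.congr (h : IsRigid c S i) (hij : c i = c j) : IsRigid c S j :=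
  fun w hw k hk => (h w hw k (hk.trans hij.symm)).trans (h w hw j hij.symm).symm

variable [DecidableEq ι]

/-- `S` and the restriction of `q` to `S` are invariant under exchanging two coordinates that lie
in the same block of the partition of `ι` into the fibres of `c`. -/
def SwapInvariantOn (c : ι → κ) (S : Submodule ℝ (ι → ℝ)) (q : QuadraticForm ℝ (ι → ℝ)) : Prop :=
  ∀ i j, c i = c j → ∀ w ∈ S, w ∘ Equiv.swap i j ∈ S ∧ q (w ∘ Equiv.swap i j) = q w

/-- The difference `e i - e j` of two vectors of the standard basis. -/
def basisDiff (i j : ι) : ι → ℝ :=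
  Pi.single i 1 - Pi.single j 1

/-- The vectors that vanish on the rigid blocks and sum to zero on each of the other blocks,
given by generators. -/
def nonrigidSpan (c : ι → κ) (S : Submodule ℝ (ι → ℝ)) : Submodule ℝ (ι → ℝ) :=
  Submodule.span ℝ {v | ∃ i j, c i = c j ∧ ¬IsRigid c S i ∧ v = basisDiff i j}

lemma basisDiff_comp_perm (σ : Equiv.Perm ι) (i j : ι) :
    basisDiff i j ∘ σ = basisDiff (σ.symm i) (σ.symm j) := by
  ext k
  simp only [basisDiff, Function.comp_apply, Pi.sub_apply, Pi.single_apply, σ.eq_symm_apply]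

lemma comp_swap_eq_sub_smul_basisDiff (w : ι → ℝ) (i j : ι) :
    w ∘ Equiv.swap i j = w - (w i - w j) • basisDiff i j := by
  ext k
  simp only [basisDiff, Function.comp_apply, Pi.sub_apply, Pi.smul_apply, Pi.single_apply,
    smul_eq_mul, Equiv.swap_apply_def]
  split_ifs <;> simp_all

lemma SwapInvariantOn.basisDiff_mem (h : SwapInvariantOn c S q) (hi : ¬IsRigid c S i)
    (hij : c i = c j) : basisDiff i j ∈ S := by
  simp only [IsRigid, not_forall] at hi
  obtain ⟨w, hw, k, hk, hwk⟩ := hi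
  have hki : basisDiff k i ∈ S := by
    have hmem := S.sub_mem hw (h k i hk w hw).1
    rw [comp_swap_eq_sub_smul_basisDiff, sub_sub_cancel] at hmem
    exact (S.smul_mem_iff (sub_ne_zero.2 hwk)).1 hmem
  rcases eq_or_ne i j with rfl | hne
  · simp [basisDiff]
  have hji : basisDiff j i ∈ S := by
    have hmem := (h k j (hk.trans hij) _ hki).1
    have hik : i ≠ k := fun h => hwk (h ▸ rfl)
    rwa [basisDiff_comp_perm, Equiv.symm_swap, Equiv.swap_apply_left,
      Equiv.swap_apply_of_ne_of_ne hik hne] at hmem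
  simpa [basisDiff] using S.neg_mem hji

lemma SwapInvariantOn.nonrigidSpan_le (h : SwapInvariantOn c S q) : nonrigidSpan c S ≤ S := by
  rw [nonrigidSpan, Submodule.span_le]
  rintro _ ⟨i, j, hij, hi, rfl⟩
  exact h.basisDiff_mem hi hij

lemma map_basisDiff_comm (q : QuadraticForm ℝ (ι → ℝ)) (i j : ι) :
    q (basisDiff i j) = q (basisDiff j i) := by
  rw [basisDiff, ← neg_sub, QuadraticMap.map_neg, basisDiff]

lemma SwapInvariantOn.map_basisDiff_left (h : SwapInvariantOn c S q) (hi : ¬IsRigid c S i)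
    (hij : c i = c j) (hik : c i = c k) (hne : i ≠ j) (hkj : k ≠ j) :
    q (basisDiff i j) = q (basisDiff k j) := by
  have hswap := (h i k hik _ (h.basisDiff_mem hi hij)).2
  rw [basisDiff_comp_perm, Equiv.symm_swap, Equiv.swap_apply_left,
    Equiv.swap_apply_of_ne_of_ne hne.symm hkj.symm] at hswap
  exact hswap.symm

lemma SwapInvariantOn.map_basisDiff (h : SwapInvariantOn c S q) (hi : ¬IsRigid c S i)
    (hij : c i = c j) (hik : c i = c k) (hil : c i = c l) (hne : i ≠ j) (hkl : k ≠ l) :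
    q (basisDiff i j) = q (basisDiff k l) := by
  have hj : ¬IsRigid c S j := fun hj => hi (hj.congr hij.symm)
  rw [map_basisDiff_comm q k l]
  rcases eq_or_ne k j with rfl | hkj
  · exact h.map_basisDiff_left hi hij hil hne hkl.symm
  · rw [h.map_basisDiff_left hi hij hik hne hkj, map_basisDiff_comm,
      h.map_basisDiff_left hj (hij.symm.trans hik) (hij.symm.trans hil) hkj.symm hkl.symm]

lemma SwapInvariantOn.exists_map_basisDiff_eq (h : SwapInvariantOn c S q) :
    ∃ γ : κ → ℝ, ∀ i j, c i = c j → i ≠ j → ¬IsRigid c S i →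
      q (basisDiff i j) = 2 * γ (c i) := by
  have hblock (a : κ) : ∃ γ : ℝ, ∀ i j, c i = a → c i = c j → i ≠ j → ¬IsRigid c S i →
      q (basisDiff i j) = 2 * γ := by
    by_cases hpair : ∃ i j, c i = a ∧ c i = c j ∧ i ≠ j ∧ ¬IsRigid c S i
    · obtain ⟨i, j, rfl, hij, hne, hi⟩ := hpair
      refine ⟨q (basisDiff i j) / 2, fun k l hk hkl hne' _ => ?_⟩
      rw [h.map_basisDiff hi hij hk.symm (hk.symm.trans hkl) hne hne']
      ring
    · push Not at hpair
      exact ⟨0, fun i j hi hij hne hri => absurd (hpair i j hi hij hne) hri⟩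
  choose γ hγ using hblock
  exact ⟨γ, fun i j => hγ (c i) i j rfl⟩

lemma SwapInvariantOn.polar_basisDiff (h : SwapInvariantOn c S q) (hij : c i = c j)
    {w : ι → ℝ} (hw : w ∈ S) (hδ : basisDiff i j ∈ S) :
    QuadraticMap.polar q w (basisDiff i j) = (w i - w j) * q (basisDiff i j) := by
  have hneg : basisDiff i j ∘ Equiv.swap i j = -basisDiff i j := by
    rw [basisDiff_comp_perm, Equiv.symm_swap, Equiv.swap_apply_left, Equiv.swap_apply_right,
      basisDiff, basisDiff, neg_sub]
  have hinv : QuadraticMap.polar q (w ∘ Equiv.swap i j) (basisDiff i j ∘ Equiv.swap i j) =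
      QuadraticMap.polar q w (basisDiff i j) := by
    rw [QuadraticMap.polar, QuadraticMap.polar, (h i j hij _ hw).2, (h i j hij _ hδ).2,
      ← (h i j hij _ (S.add_mem hw hδ)).2]
    rfl
  rw [hneg, comp_swap_eq_sub_smul_basisDiff, QuadraticMap.polar_neg_right,
    QuadraticMap.polar_sub_left, QuadraticMap.polar_smul_left, QuadraticMap.polar_self,
    smul_eq_mul, two_nsmul] at hinv
  linarith

variable [Fintype ι]

lemma polar_weightedSumSquares_basisDiff {γ : κ → ℝ} (hij : c i = c j) (w : ι → ℝ) :
    QuadraticMap.polar (QuadraticMap.weightedSumSquares ℝ (γ ∘ c)) w (basisDiff i j) =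
      2 * γ (c i) * (w i - w j) := by
  have hpolar (w v : ι → ℝ) :
      QuadraticMap.polar (QuadraticMap.weightedSumSquares ℝ (γ ∘ c)) w v =
        ∑ k, 2 * γ (c k) * w k * v k := by
    simp only [QuadraticMap.polar, QuadraticMap.weightedSumSquares_apply, smul_eq_mul,
      Pi.add_apply, Function.comp_apply, ← Finset.sum_sub_distrib]
    exact Finset.sum_congr rfl fun k _ => by ring
  simp only [hpolar, basisDiff, Pi.sub_apply, mul_sub, Finset.sum_sub_distrib, Pi.single_apply,
    mul_ite, mul_one, mul_zero, Finset.sum_ite_eq', Finset.mem_univ, if_true, hij]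

lemma mem_nonrigidSpan {δ : ι → ℝ} (hδr : ∀ i, IsRigid c S i → δ i = 0)
    (hδ : ∀ f : κ → ℝ, ∑ i, f (c i) * δ i = 0) : δ ∈ nonrigidSpan c S := by
  rcases isEmpty_or_nonempty ι with _ | _
  · rw [Subsingleton.elim δ 0]
    exact Submodule.zero_mem _
  let r (i : ι) : ι := Function.invFun c (c i)
  have hr (i : ι) : c i = c (r i) := (Function.invFun_eq ⟨i, rfl⟩).symm
  have hsum : δ = ∑ i, δ i • basisDiff i (r i) := by
    ext k
    have hzero : ∑ i, δ i * (if k = r i then (1 : ℝ) else 0) = 0 :=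
      (Finset.sum_congr rfl fun i _ => mul_comm _ _).trans
        (hδ fun a => if k = Function.invFun c a then 1 else 0)
    simp only [Finset.sum_apply, Pi.smul_apply, basisDiff, Pi.sub_apply, Pi.single_apply,
      smul_eq_mul, mul_sub, Finset.sum_sub_distrib, hzero]
    simp
  rw [hsum]
  refine Submodule.sum_mem _ fun i _ => ?_
  by_cases hi : IsRigid c S i
  · rw [hδr i hi, zero_smul]
    exact Submodule.zero_mem _
  · exact Submodule.smul_mem _ _ (Submodule.subset_span ⟨i, r i, hr i, hi, rfl⟩)

/-- The weights `γ` turn a block symmetric quadratic form into a multiple of the squared norm on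
the nonrigid blocks: there, `q - ∑ i, γ (c i) * w i ^ 2` only depends on the block sums of `w`. -/
def IsBlockWeight (c : ι → κ) (S : Submodule ℝ (ι → ℝ)) (q : QuadraticForm ℝ (ι → ℝ))
    (γ : κ → ℝ) : Prop :=
  ∀ w ∈ S, ∀ w' : ι → ℝ, (∀ i, IsRigid c S i → w' i = w i) →
    (∀ f : κ → ℝ, ∑ i, f (c i) * w' i = ∑ i, f (c i) * w i) →
    w' ∈ S ∧ (q - QuadraticMap.weightedSumSquares ℝ (γ ∘ c)) w' =
      (q - QuadraticMap.weightedSumSquares ℝ (γ ∘ c)) w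

lemma SwapInvariantOn.polar_sub_weightedSumSquares (h : SwapInvariantOn c S q) {γ : κ → ℝ}
    (hγ : ∀ i j, c i = c j → i ≠ j → ¬IsRigid c S i → q (basisDiff i j) = 2 * γ (c i))
    {w δ : ι → ℝ} (hw : w ∈ S) (hδ : δ ∈ nonrigidSpan c S) :
    QuadraticMap.polar (q - QuadraticMap.weightedSumSquares ℝ (γ ∘ c)) w δ = 0 := by
  set W := QuadraticMap.weightedSumSquares ℝ (γ ∘ c) with hW
  have hle : nonrigidSpan c S ≤ LinearMap.ker ((q - W).polarBilin w) := by
    rw [nonrigidSpan, Submodule.span_le]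
    rintro _ ⟨i, j, hij, hi, rfl⟩
    rcases eq_or_ne i j with rfl | hne
    · simp [basisDiff]
    · calc QuadraticMap.polar (q - W) w (basisDiff i j)
          = QuadraticMap.polar q w (basisDiff i j) - QuadraticMap.polar W w (basisDiff i j) := by
            simp only [QuadraticMap.polar, _root_.sub_apply]
            ring
        _ = 0 := by
            rw [h.polar_basisDiff hij hw (h.basisDiff_mem hi hij), hγ i j hij hne hi, hW,
              polar_weightedSumSquares_basisDiff hij]
            ring
  exact hle hδ

lemma SwapInvariantOn.exists_isBlockWeight (h : SwapInvariantOn c S q) :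
    ∃ γ : κ → ℝ, IsBlockWeight c S q γ := by
  obtain ⟨γ, hγ⟩ := h.exists_map_basisDiff_eq
  refine ⟨γ, fun w hw w' hrigid hsum => ?_⟩
  set D := q - QuadraticMap.weightedSumSquares ℝ (γ ∘ c)
  obtain ⟨δ, rfl⟩ : ∃ δ, w' = w + δ := ⟨w' - w, (add_sub_cancel w w').symm⟩
  have hδ : δ ∈ nonrigidSpan c S := by
    refine mem_nonrigidSpan (fun i hi => ?_) fun f => ?_
    · simpa using hrigid i hi
    · simpa [mul_add, Finset.sum_add_distrib] using hsum f
  have hDδ : D δ = 0 := by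
    have hself := h.polar_sub_weightedSumSquares hγ (h.nonrigidSpan_le hδ) hδ
    rw [QuadraticMap.polar_self] at hself
    exact (smul_eq_zero.1 hself).resolve_left two_ne_zero
  refine ⟨S.add_mem hw (h.nonrigidSpan_le hδ), ?_⟩
  rw [QuadraticMap.map_add D, hDδ, h.polar_sub_weightedSumSquares hγ hw hδ, add_zero, add_zero]

end BlockSymmetricForms

section SpectralLift

variable {ι : Type*} {x y w : ι → ℝ} {S : Submodule ℝ (ι → ℝ)}
  {q : QuadraticForm ℝ (ι → ℝ)} {γ : ℝ → ℝ} {H P : Matrix ι ι ℝ}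

/-- The matrices whose diagonal lies in `S` and whose off-diagonal entries vanish on the rigid
blocks of the partition of `ι` into the fibres of `x`. -/
def spectralSubmodule (x : ι → ℝ) (S : Submodule ℝ (ι → ℝ)) : Submodule ℝ (Matrix ι ι ℝ) where
  carrier := {H | H.diag ∈ S ∧ ∀ i j, i ≠ j → x i = x j → IsRigid x S i → H i j = 0}
  add_mem' hA hB := ⟨S.add_mem hA.1 hB.1, fun i j hij hx hi => by
    rw [Matrix.add_apply, hA.2 i j hij hx hi, hB.2 i j hij hx hi, add_zero]⟩
  zero_mem' := ⟨S.zero_mem, fun _ _ _ _ _ => rfl⟩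
  smul_mem' a A hA := ⟨S.smul_mem a hA.1, fun i j hij hx hi => by
    rw [Matrix.smul_apply, hA.2 i j hij hx hi, smul_zero]⟩

lemma mem_spectralSubmodule : H ∈ spectralSubmodule x S ↔
    H.diag ∈ S ∧ ∀ i j, i ≠ j → x i = x j → IsRigid x S i → H i j = 0 :=
  Iff.rfl

lemma HasDiagonalBlocks.diag_eq [DecidableEq ι] (hH : HasDiagonalBlocks x w H) : H.diag = w :=
  funext fun i => (hH i i rfl).trans (diagonal_apply_eq w i)

lemma HasDiagonalBlocks.mem_spectralSubmodule_iff [DecidableEq ι] (hH : HasDiagonalBlocks x w H) :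
    H ∈ spectralSubmodule x S ↔ w ∈ S := by
  rw [mem_spectralSubmodule, hH.diag_eq, and_iff_left_iff_imp]
  intro _ i j hij hx _
  rw [hH i j hx, diagonal_apply_ne w hij]

/-- The entrywise weights of `spectralQuad`. By the convention `a / 0 = 0` the first term vanishes
on the blocks, where the second one takes over. -/
def spectralWeight (x y : ι → ℝ) (γ : ℝ → ℝ) : Matrix ι ι ℝ :=
  of fun i j => (y j - y i) / (x j - x i) + if x i = x j then γ (x i) else 0

variable [Fintype ι]

/-- The quadratic form of the second subderivative of a spectral function at a diagonal matrix,
built from the quadratic form `q` of the underlying symmetric function. -/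
def spectralQuad (x y : ι → ℝ) (q : QuadraticForm ℝ (ι → ℝ)) (γ : ℝ → ℝ) :
    QuadraticForm ℝ (Matrix ι ι ℝ) :=
  (q - QuadraticMap.weightedSumSquares ℝ (γ ∘ x)).comp (diagLinearMap ι ℝ ℝ) +
    ∑ i, (QuadraticMap.weightedSumSquares ℝ (spectralWeight x y γ i)).comp
      (LinearMap.proj i ∘ₗ (ofLinearEquiv ℝ).symm.toLinearMap)

lemma spectralQuad_apply (x y : ι → ℝ) (q : QuadraticForm ℝ (ι → ℝ)) (γ : ℝ → ℝ)
    (H : Matrix ι ι ℝ) :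
    spectralQuad x y q γ H = (q - QuadraticMap.weightedSumSquares ℝ (γ ∘ x)) H.diag +
      ∑ i, ∑ j, spectralWeight x y γ i j * H i j ^ 2 := by
  have hdiag : diagLinearMap ι ℝ ℝ H = H.diag := rfl
  simp [spectralQuad, QuadraticMap.weightedSumSquares_apply, hdiag, sq]

variable [DecidableEq ι]

lemma HasDiagonalBlocks.spectralQuad_eq (hH : HasDiagonalBlocks x w H) :
    spectralQuad x y q γ H = q w + curvQuad x y H := by
  have hblock (i j : ι) : (if x i = x j then γ (x i) else 0) * H i j ^ 2 =
      if i = j then γ (x i) * w i ^ 2 else 0 := by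
    by_cases hx : x i = x j
    · rw [if_pos hx, hH i j hx, diagonal_apply]
      split_ifs <;> simp
    · rw [if_neg hx, if_neg fun h => hx (congrArg x h), zero_mul]
  rw [spectralQuad_apply, hH.diag_eq, curvQuad, _root_.sub_apply,
    QuadraticMap.weightedSumSquares_apply]
  simp only [spectralWeight, of_apply, add_mul, hblock, Finset.sum_add_distrib,
    Finset.sum_ite_eq, Finset.mem_univ, if_true, Function.comp_apply, smul_eq_mul, ← sq]
  ring

lemma IsFiberwise.conj_rigid (hP : IsFiberwise x P) (hPP : P * Pᵀ = 1)
    (hH : H ∈ spectralSubmodule x S) {i j : ι} (hi : IsRigid x S i) (hx : x i = x j) :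
    (P * H * Pᵀ) i j = diagonal H.diag i j := by
  classical
  let m : Matrix ι ι ℝ := of fun i j => if x i = x j ∧ IsRigid x S i then 1 else 0
  let f : ι → ℝ := fun i => if IsRigid x S i then H i i else 0
  have hm : ∀ i i' j j', x i = x i' → x j = x j' → m i j = m i' j' := by
    intro i i' j j' hxi hxj
    have hiff : IsRigid x S i ↔ IsRigid x S i' := ⟨(·.congr hxi), (·.congr hxi.symm)⟩
    simp only [m, of_apply, hxi, hxj, hiff]
  have hf : ∀ i j, x i = x j → f i = f j := by
    intro i j hxij
    by_cases hri : IsRigid x S i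
    · simp only [f, if_pos hri, if_pos (hri.congr hxij)]
      exact (hri _ hH.1 j hxij.symm).symm
    · simp only [f, if_neg hri, if_neg fun hrj : IsRigid x S j => hri (hrj.congr hxij.symm)]
  have hmH : m ⊙ H = diagonal f := by
    ext k l
    rcases eq_or_ne k l with rfl | hkl
    · simp [m, f]
    · by_cases hxr : x k = x l ∧ IsRigid x S k
      · simp [diagonal_apply_ne _ hkl, hH.2 k l hkl hxr.1 hxr.2]
      · simp [m, diagonal_apply_ne _ hkl, hxr]
  have hconj := hP.hadamard_conj hm H
  rw [hmH, hP.conj_diagonal hPP hf] at hconj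
  simpa [m, f, hi, hx, diagonal_apply] using congrFun (congrFun hconj i) j

lemma IsBlockWeight.conj (hγ : IsBlockWeight x S q γ)
    (hP : IsFiberwise (fun i => (x i, y i)) P) (hPP : P * Pᵀ = 1)
    (hH : H ∈ spectralSubmodule x S) :
    P * H * Pᵀ ∈ spectralSubmodule x S ∧
      spectralQuad x y q γ (P * H * Pᵀ) = spectralQuad x y q γ H := by
  have hPx : IsFiberwise x P := fun i j hij => hP i j fun h => hij (congrArg Prod.fst h)
  obtain ⟨hmem, heq⟩ := hγ H.diag hH.1 (P * H * Pᵀ).diag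
    (fun i hi => by rw [diag_apply, hPx.conj_rigid hPP hH hi rfl, diagonal_apply_eq])
    (fun f => hPx.sum_mul_conj_apply_self hPP (f := f ∘ x) (fun i j h => congrArg f h) H)
  refine ⟨⟨hmem, fun i j hij hx hi => ?_⟩, ?_⟩
  · rw [hPx.conj_rigid hPP hH hi hx, diagonal_apply_ne _ hij]
  · rw [spectralQuad_apply, spectralQuad_apply, heq, hP.sum_mul_conj_apply_sq hPP]
    intro i i' j j' hi hj
    simp only [Prod.mk.injEq] at hi hj
    simp only [spectralWeight, of_apply, hi.1, hi.2, hj.1, hj.2]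

end SpectralLift

section GeneralizedTwiceDifferentiability

variable {n : ℕ} {θ : (Fin n → ℝ) → EReal} {x y w : Fin n → ℝ} {H : Sym n}

lemma subderiv2_specFn_diagSym_of_proxSubgrad (hθ : SymmetricFn θ)
    (hprox : ProxSubgrad ipM (specFn θ) (diagSym x) (diagSym y)) (w : Fin n → ℝ) :
    subderiv2 ipM (specFn θ) (diagSym x) (diagSym y) (diagSym w) = subderiv2 ipV θ x y w := by
  by_cases htop : subderiv2 ipM (specFn θ) (diagSym x) (diagSym y) (diagSym w) = ⊤
  · rw [htop, eq_comm, ← top_le_iff, ← htop]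
    exact subderiv2_specFn_diagSym_le hθ x y w
  · refine subderiv2_specFn_diagSym hθ ((isFiniteAt_specFn_diagSym hθ).1 hprox.1) fun i j hx => ?_
    simpa [diagSym] using mul_sub_apply_self_nonneg_of_subderiv2_ne_top hθ hprox htop hx

lemma mul_sub_nonneg_of_subderiv2_ne_top (hθ : SymmetricFn θ)
    (hprox : ProxSubgrad ipM (specFn θ) (diagSym x) (diagSym y))
    (hw : subderiv2 ipV θ x y w ≠ ⊤) {i j : Fin n} (hx : x i = x j) :
    0 ≤ (y i - y j) * (w i - w j) := by
  rw [← subderiv2_specFn_diagSym_of_proxSubgrad hθ hprox] at hw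
  simpa [diagSym] using mul_sub_apply_self_nonneg_of_subderiv2_ne_top hθ hprox hw hx

lemma TwiceEpiDiff.of_specFn_diagSym (hθ : SymmetricFn θ)
    (hprox : ProxSubgrad ipM (specFn θ) (diagSym x) (diagSym y))
    (h : TwiceEpiDiff ipM (specFn θ) (diagSym x) (diagSym y)) : TwiceEpiDiff ipV θ x y := by
  refine ⟨(isFiniteAt_specFn_diagSym hθ).1 h.1, fun t ht ht0 w => ?_⟩
  by_cases htop : subderiv2 ipV θ x y w = ⊤
  · exact ⟨fun _ => w, tendsto_const_nhds, tendsto_sdq2_of_subderiv2_eq_top ht ht0 htop⟩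
  · exact exists_recovery_of_specFn hθ h
      (fun i j => mul_sub_nonneg_of_subderiv2_ne_top hθ hprox htop) ht ht0

lemma GenTwiceDiff.of_specFn_diagSym (hθ : SymmetricFn θ)
    (hprox : ProxSubgrad ipM (specFn θ) (diagSym x) (diagSym y))
    (h : GenTwiceDiff ipM (specFn θ) (diagSym x) (diagSym y)) : GenTwiceDiff ipV θ x y := by
  obtain ⟨S, q, hq⟩ := IsGQF.exists_isQuadOn (B := traceForm n) h.2
  have hcomp : subderiv2 ipM (specFn θ) (diagSym x) (diagSym y) ∘ diagSymLin n =
      subderiv2 ipV θ x y :=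
    funext (subderiv2_specFn_diagSym_of_proxSubgrad hθ hprox)
  refine ⟨h.1.of_specFn_diagSym hθ hprox, ?_⟩
  rw [← hcomp]
  exact (hq.comp (diagSymLin n)).isGQF dotForm_nondegenerate dotForm_isSymm

lemma IsFiberwise.subderiv2_specFn_conjSym {P : Matrix (Fin n) (Fin n) ℝ}
    (hP : IsFiberwise (fun i => (x i, y i)) P) (hPP : P * Pᵀ = 1) (hθ : SymmetricFn θ)
    (H : Sym n) :
    subderiv2 ipM (specFn θ) (diagSym x) (diagSym y) (conjSym hPP H) =
      subderiv2 ipM (specFn θ) (diagSym x) (diagSym y) H := by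
  have h := subderiv2_map (ipM_conjSym hPP) (specFn_conjSym hθ hPP) (diagSym x) (diagSym y) H
  rwa [conjSym_diagSym_of_isFiberwise hP hPP fun _ _ hz => congrArg Prod.fst hz,
    conjSym_diagSym_of_isFiberwise hP hPP fun _ _ hz => congrArg Prod.snd hz] at h

lemma IsFiberwise.sdq2_specFn_conjSym {P : Matrix (Fin n) (Fin n) ℝ}
    (hP : IsFiberwise (fun i => (x i, y i)) P) (hPP : P * Pᵀ = 1) (hθ : SymmetricFn θ)
    (t : ℝ) (H : Sym n) :
    sdq2 ipM (specFn θ) (diagSym x) (diagSym y) t (conjSym hPP H) =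
      sdq2 ipM (specFn θ) (diagSym x) (diagSym y) t H := by
  have h := sdq2_map (ipM_conjSym hPP) (specFn_conjSym hθ hPP) (diagSym x) (diagSym y) t H
  rwa [conjSym_diagSym_of_isFiberwise hP hPP fun _ _ hz => congrArg Prod.fst hz,
    conjSym_diagSym_of_isFiberwise hP hPP fun _ _ hz => congrArg Prod.snd hz] at h

lemma exists_conjSym_hasDiagonalBlocks (hyH : ∀ i j, x i = x j → (y i - y j) * H.val i j = 0) :
    ∃ (P : Matrix (Fin n) (Fin n) ℝ) (hPP : P * Pᵀ = 1) (w : Fin n → ℝ) (H' : Sym n),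
      IsFiberwise (fun i => (x i, y i)) P ∧ HasDiagonalBlocks x w H'.val ∧ conjSym hPP H' = H := by
  obtain ⟨P, w, hPP, hP, hblocks⟩ := exists_isFiberwise_hasDiagonalBlocks H.2 hyH
  exact ⟨P, hPP, w, (conjSym hPP).symm H, hP, hblocks, (conjSym hPP).apply_symm_apply H⟩

lemma HasDiagonalBlocks.mul_sub_nonneg_of_subderiv2_ne_top (hH : HasDiagonalBlocks x w H.val)
    (hθ : SymmetricFn θ) (hprox : ProxSubgrad ipM (specFn θ) (diagSym x) (diagSym y))
    (htop : subderiv2 ipM (specFn θ) (diagSym x) (diagSym y) H ≠ ⊤) {i j : Fin n}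
    (hx : x i = x j) : 0 ≤ (y i - y j) * (w i - w j) := by
  rw [← hH.diag_eq]
  exact mul_sub_apply_self_nonneg_of_subderiv2_ne_top hθ hprox htop hx

lemma TwiceEpiDiff.specFn_diagSym (hθ : SymmetricFn θ)
    (hprox : ProxSubgrad ipM (specFn θ) (diagSym x) (diagSym y)) (h : TwiceEpiDiff ipV θ x y) :
    TwiceEpiDiff ipM (specFn θ) (diagSym x) (diagSym y) := by
  refine ⟨hprox.1, fun t ht ht0 H => ?_⟩
  by_cases htop : subderiv2 ipM (specFn θ) (diagSym x) (diagSym y) H = ⊤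
  · exact ⟨fun _ => H, tendsto_const_nhds, tendsto_sdq2_of_subderiv2_eq_top ht ht0 htop⟩
  obtain ⟨P, hPP, w, H', hP, hblocks, rfl⟩ := exists_conjSym_hasDiagonalBlocks fun i j =>
    mul_apply_eq_zero_of_subderiv2_ne_top hθ hprox htop
  rw [hP.subderiv2_specFn_conjSym hPP hθ] at htop ⊢
  obtain ⟨Hs, hHs, hlim⟩ := exists_recovery_specFn hθ h hblocks
    (fun i j => hblocks.mul_sub_nonneg_of_subderiv2_ne_top hθ hprox htop) ht ht0
  refine ⟨fun k => conjSym hPP (Hs k), ((conjSym hPP).continuous.tendsto H').comp hHs, ?_⟩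
  simpa only [hP.sdq2_specFn_conjSym hPP hθ] using hlim

lemma IsQuadOn.mul_sub_eq_zero {S : Submodule ℝ (Fin n → ℝ)} {q : QuadraticForm ℝ (Fin n → ℝ)}
    (hq : IsQuadOn S q (subderiv2 ipV θ x y)) (hθ : SymmetricFn θ)
    (hprox : ProxSubgrad ipM (specFn θ) (diagSym x) (diagSym y)) (hw : w ∈ S) {i j : Fin n}
    (hx : x i = x j) : (y i - y j) * (w i - w j) = 0 := by
  have hpos := mul_sub_nonneg_of_subderiv2_ne_top hθ hprox (hq.ne_top_iff.2 hw) hx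
  have hneg := mul_sub_nonneg_of_subderiv2_ne_top hθ hprox (hq.ne_top_iff.2 (S.neg_mem hw)) hx
  simp only [Pi.neg_apply] at hneg
  linarith

lemma comp_swap_eq_self {ι α : Type*} [DecidableEq ι] {f : ι → α} {i j : ι} (h : f i = f j) :
    f ∘ Equiv.swap i j = f := by
  rw [Equiv.comp_swap_eq_update, h, Function.update_eq_self, ← h, Function.update_eq_self]

lemma subderiv2_comp_perm (hθ : SymmetricFn θ) (x y w : Fin n → ℝ) (σ : Equiv.Perm (Fin n)) :
    subderiv2 ipV θ (x ∘ σ) (y ∘ σ) (w ∘ σ) = subderiv2 ipV θ x y w :=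
  subderiv2_map (e := (LinearEquiv.funCongrLeft ℝ ℝ σ).toContinuousLinearEquiv)
    (fun a b => Equiv.sum_comp σ fun i => a i * b i) (fun a => hθ a σ) x y w

lemma IsQuadOn.swapInvariantOn {S : Submodule ℝ (Fin n → ℝ)} {q : QuadraticForm ℝ (Fin n → ℝ)}
    (hq : IsQuadOn S q (subderiv2 ipV θ x y)) (hθ : SymmetricFn θ)
    (hprox : ProxSubgrad ipM (specFn θ) (diagSym x) (diagSym y)) : SwapInvariantOn x S q := by
  intro i j hx w hw
  rcases mul_eq_zero.1 (hq.mul_sub_eq_zero hθ hprox hw hx) with hy | hwij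
  · have hperm := subderiv2_comp_perm hθ x y w (Equiv.swap i j)
    rw [comp_swap_eq_self hx, comp_swap_eq_self (sub_eq_zero.1 hy)] at hperm
    have hmem : w ∘ Equiv.swap i j ∈ S := hq.ne_top_iff.1 (hperm ▸ hq.ne_top_iff.2 hw)
    refine ⟨hmem, ?_⟩
    rwa [hq.1 _ hmem, hq.1 _ hw, EReal.coe_eq_coe_iff] at hperm
  · rw [comp_swap_eq_self (sub_eq_zero.1 hwij)]
    exact ⟨hw, rfl⟩

lemma IsQuadOn.mul_apply_eq_zero_of_mem_spectralSubmodule {S : Submodule ℝ (Fin n → ℝ)}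
    {q : QuadraticForm ℝ (Fin n → ℝ)} (hq : IsQuadOn S q (subderiv2 ipV θ x y))
    (hθ : SymmetricFn θ) (hprox : ProxSubgrad ipM (specFn θ) (diagSym x) (diagSym y))
    {A : Matrix (Fin n) (Fin n) ℝ} (hA : A ∈ spectralSubmodule x S) {i j : Fin n}
    (hx : x i = x j) : (y i - y j) * A i j = 0 := by
  rcases eq_or_ne i j with rfl | hij
  · rw [sub_self, zero_mul]
  by_cases hi : IsRigid x S i
  · rw [hA.2 i j hij hx hi, mul_zero]
  · have hmem := (hq.swapInvariantOn hθ hprox).basisDiff_mem hi hx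
    have hy := hq.mul_sub_eq_zero hθ hprox hmem hx
    have hsub : basisDiff i j i - basisDiff i j j = 2 := by
      simp [basisDiff, hij, hij.symm, one_add_one_eq_two]
    rw [hsub, mul_eq_zero, or_iff_left two_ne_zero] at hy
    rw [hy, zero_mul]

lemma IsQuadOn.specFn_diagSym {S : Submodule ℝ (Fin n → ℝ)} {q : QuadraticForm ℝ (Fin n → ℝ)}
    (hq : IsQuadOn S q (subderiv2 ipV θ x y)) (hθ : SymmetricFn θ)
    (hprox : ProxSubgrad ipM (specFn θ) (diagSym x) (diagSym y)) {γ : ℝ → ℝ}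
    (hγ : IsBlockWeight x S q γ) :
    IsQuadOn ((spectralSubmodule x S).comap (symSubmodule n).subtype)
      ((spectralQuad x y q γ).comp (symSubmodule n).subtype)
      (subderiv2 ipM (specFn θ) (diagSym x) (diagSym y)) := by
  have hfin : IsFiniteAt θ x := (isFiniteAt_specFn_diagSym hθ).1 hprox.1
  refine ⟨fun H hH => ?_, fun H => not_imp_comm.1 fun htop => ?_⟩
  · obtain ⟨P, hPP, w, H', hP, hblocks, rfl⟩ := exists_conjSym_hasDiagonalBlocks fun i j =>
      hq.mul_apply_eq_zero_of_mem_spectralSubmodule hθ hprox hH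
    have hH' : H'.val ∈ spectralSubmodule x S := by
      have hmem : ((conjSym hPP).symm (conjSym hPP H')).val ∈ spectralSubmodule x S :=
        (hγ.conj hP.transpose (mul_eq_one_comm.1 hPP) hH).1
      rwa [(conjSym hPP).symm_apply_apply] at hmem
    have hw : w ∈ S := hblocks.mem_spectralSubmodule_iff.1 hH'
    calc subderiv2 ipM (specFn θ) (diagSym x) (diagSym y) (conjSym hPP H')
        = subderiv2 ipV θ x y w + (curvQuad x y H'.val : ℝ) := by
          rw [hP.subderiv2_specFn_conjSym hPP hθ, subderiv2_specFn_eq_add_curvQuad hθ hfin hblocks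
            fun i j hx => (hq.mul_sub_eq_zero hθ hprox hw hx).ge]
      _ = (spectralQuad x y q γ H'.val : ℝ) := by
          rw [hq.1 w hw, hblocks.spectralQuad_eq, EReal.coe_add]
      _ = (spectralQuad x y q γ (conjSym hPP H').val : ℝ) := by
          rw [conjSym_val, (hγ.conj hP hPP hH').2]
  · obtain ⟨P, hPP, w, H', hP, hblocks, rfl⟩ := exists_conjSym_hasDiagonalBlocks fun i j =>
      mul_apply_eq_zero_of_subderiv2_ne_top hθ hprox htop
    rw [hP.subderiv2_specFn_conjSym hPP hθ] at htop
    rw [subderiv2_specFn_eq_add_curvQuad hθ hfin hblocks fun i j =>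
      hblocks.mul_sub_nonneg_of_subderiv2_ne_top hθ hprox htop] at htop
    have hw : w ∈ S := hq.ne_top_iff.1 fun h => htop (by rw [h, EReal.top_add_coe])
    exact (hγ.conj hP hPP (hblocks.mem_spectralSubmodule_iff.2 hw)).1

lemma GenTwiceDiff.specFn_diagSym (hθ : SymmetricFn θ)
    (hprox : ProxSubgrad ipM (specFn θ) (diagSym x) (diagSym y)) (h : GenTwiceDiff ipV θ x y) :
    GenTwiceDiff ipM (specFn θ) (diagSym x) (diagSym y) := by
  obtain ⟨S, q, hq⟩ := IsGQF.exists_isQuadOn (B := dotForm n) h.2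
  obtain ⟨γ, hγ⟩ := (hq.swapInvariantOn hθ hprox).exists_isBlockWeight
  exact ⟨h.1.specFn_diagSym hθ hprox,
    (hq.specFn_diagSym hθ hprox hγ).isGQF traceForm_nondegenerate traceForm_isSymm⟩

theorem genTwiceDiff_specFn_diagSym_iff (hθ : SymmetricFn θ)
    (hprox : ProxSubgrad ipM (specFn θ) (diagSym x) (diagSym y)) :
    GenTwiceDiff ipM (specFn θ) (diagSym x) (diagSym y) ↔ GenTwiceDiff ipV θ x y :=
  ⟨.of_specFn_diagSym hθ hprox, .specFn_diagSym hθ hprox⟩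

theorem gen_twice_diff_spectral_general (hθ : SymmetricFn θ) {X Y : Sym n}
    (hprox : ProxSubgrad ipM (specFn θ) X Y) {U : Matrix (Fin n) (Fin n) ℝ} (hU : U * Uᵀ = 1)
    (hX : X.val = U * diagonal x * Uᵀ) (hY : Y.val = U * diagonal y * Uᵀ) :
    GenTwiceDiff ipM (specFn θ) X Y ↔ GenTwiceDiff ipV θ x y := by
  obtain rfl : X = conjSym hU (diagSym x) := Subtype.ext hX
  obtain rfl : Y = conjSym hU (diagSym y) := Subtype.ext hY
  rw [ProxSubgrad.map_iff (ipM_conjSym hU) (specFn_conjSym hθ hU)] at hprox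
  exact (GenTwiceDiff.map_iff (B := traceForm n) traceForm_nondegenerate traceForm_isSymm
    (ipM_conjSym hU) (specFn_conjSym hθ hU)).trans (genTwiceDiff_specFn_diagSym_iff hθ hprox)

end GeneralizedTwiceDifferentiability

/-- Theorem 4.1: `g` is generalized twice differentiable at `X` for `Y` iff
`θ` is generalized twice differentiable at `λ(X)` for `y`. -/
theorem gen_twice_diff_spectral {n : ℕ} (θ : (Fin n → ℝ) → EReal)
    (X Y : Sym n) (U : Matrix (Fin n) (Fin n) ℝ) (y : Fin n → ℝ)
    (hsym : SymmetricFn θ) (hLip : LocLipRelDom ipV θ)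
    (hprox : ProxSubgrad ipM (specFn θ) X Y)
    (hparab : ∀ U' ∈ eigOrth X.val, ∀ H : Sym n,
      H ∈ tangentCone {A : Sym n | specFn θ A ≠ ⊤} X →
        ParabEpiDiff θ (eigval X.val) (lambdaDir X.val U' H.val))
    (hgreg : SubdiffRegularAt ipM (specFn θ) X)
    (hy : RegSubgrad ipV θ (eigval X.val) y)
    (hU : U ∈ eigOrth X.val)
    (hYdec : Y.val = U * Matrix.diagonal y * Uᵀ) :
    GenTwiceDiff ipM (specFn θ) X Y ↔ GenTwiceDiff ipV θ (eigval X.val) y :=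
  gen_twice_diff_spectral_general hsym hprox hU.1 hU.2 hYdec

end SpecPaper
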